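/- arXiv:2207.00194 — 3 statements merged into one kernel-verified Lean document; each statement's English description precedes it below -/
import Mathlib

section
/- Let {E_j}_{j=1}^m be a finite set of distinct points in (-2,2) and let {θ_j}_{j=1}^m ⊂ [0,π). Then there exists a potential V : ℕ → ℝ and a constant C > 0 with |V(n)| ≤ C/(1+n) for all n, such that for every j = 1,…,m the eigen-equation u(n+1) + u(n-1) + V(n)u(n) = E_j·u(n) (n ≥ 1) has a nonzero solution u ∈ ℓ²(ℕ) satisfying the boundary condition u(1)·cos(θ_j) = u(0)·sin(θ_j). -/
/-!
With `E i = 2 * cos (k i)`, the potential `8 * W n / (n + 1)` of Wigner–von Neumann type, where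
`W n = ∑ i, cos (2 * k i * (n + 1))`, is resonant at every `E i`: complex Prüfer amplitudes of the
solutions satisfy `A (n + 1) - A n = K n (A n) / (n + 1)`, where `K n` is `-ν` times complex
conjugation, `2 ≤ ν`, up to terms with bounded partial sums. An averaging change of variables
removes these terms, after which a cone argument yields one solution of size `O(1 / n)`. All
resonances, including the one between `E` and `-E`, contribute to `ν` with the same sign because
cosines are even. The initial data of these decaying solutions cannot be prescribed.

They are corrected by finitely many further values of the potential, provided that products of
transfer matrices along a common potential map every family of nonzero vectors, one for each energy,
to every other such family. The closure of the set of these products in `∏ j, SL(2, ℝ)` is a group,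
since powers of an elliptic matrix accumulate at its inverse. It contains the constant families and
the unipotent family with off-diagonal entries `E j`; as the `E j` are distinct, polynomial
interpolation shows that it is everything. Density is upgraded to exact transitivity by the
submersion theorem: the inverse images of the shear direction under the dense set of products lie in
a maximal space of tangent directions to an orbit, and by density they span all directions.
-/

open Filter Topology Asymptotics
open Matrix.SpecialLinearGroup (transvection diag2 diag2_coe')
open scoped MatrixGroups Pointwise ComplexConjugate

section Elliptic

theorem det_smul_one_add_smul_of_mul_self_eq_neg_one {J : Matrix (Fin 2) (Fin 2) ℝ}
    (hJ : J * J = -1) (x y : ℝ) : (x • 1 + y • J).det = x ^ 2 + y ^ 2 := by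
  have h00 : J 0 0 * J 0 0 + J 0 1 * J 1 0 = -1 := by
    simpa [Matrix.mul_apply] using congr_fun₂ hJ 0 0
  have h01 : J 0 0 * J 0 1 + J 0 1 * J 1 1 = 0 := by
    simpa [Matrix.mul_apply] using congr_fun₂ hJ 0 1
  have hne : J 0 1 ≠ 0 := fun h => by
    rw [h, zero_mul, add_zero] at h00
    nlinarith
  have htrace : J 1 1 = -J 0 0 := by
    apply mul_left_cancel₀ hne
    linarith
  simp only [Matrix.det_fin_two, Matrix.add_apply, Matrix.smul_apply, Matrix.one_apply_eq, ne_eq,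
    zero_ne_one, one_ne_zero, not_false_eq_true, Matrix.one_apply_ne, htrace, smul_eq_mul]
  linear_combination -y ^ 2 * h00

theorem exists_continuous_circle_monoidHom {J : Matrix (Fin 2) (Fin 2) ℝ} (hJ : J * J = -1) :
    ∃ φ : Circle →* SL(2, ℝ), Continuous φ ∧
      ∀ z : Circle, (φ z).1 = (z : ℂ).re • 1 + (z : ℂ).im • J := by
  let Φ : ℂ →ₐ[ℝ] Matrix (Fin 2) (Fin 2) ℝ := Complex.lift ⟨J, hJ⟩
  have hΦ (z : ℂ) : Φ z = z.re • 1 + z.im • J := by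
    simp [Φ, Complex.liftAux_apply, Algebra.algebraMap_eq_smul_one]
  have hdet (z : Circle) : (Φ z).det = 1 := by
    rw [hΦ, det_smul_one_add_smul_of_mul_self_eq_neg_one hJ, sq, sq, ← Complex.normSq_apply,
      Circle.normSq_coe]
  refine ⟨{ toFun := fun z => ⟨Φ z, hdet z⟩
            map_one' := Subtype.ext (by simp)
            map_mul' := fun z w => Subtype.ext (map_mul Φ (z : ℂ) w) }, ?_, fun z => hΦ z⟩
  refine Continuous.subtype_mk ?_ _
  simp only [hΦ]
  fun_prop

theorem exists_continuous_circle_monoidHom_eq_of_abs_trace_lt_two {A : SL(2, ℝ)}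
    (hA : |A.1.trace| < 2) :
    ∃ (φ : Circle →* SL(2, ℝ)) (z : Circle), Continuous φ ∧ φ z = A := by
  set c := A.1.trace / 2 with hc
  obtain ⟨hc₁, hc₂⟩ := abs_lt.1 hA
  set k := Real.arccos c
  have hcos : Real.cos k = c := Real.cos_arccos (by linarith) (by linarith)
  have hsin : Real.sin k ≠ 0 :=
    (Real.sin_pos_of_pos_of_lt_pi (Real.arccos_pos.2 (by linarith))
      (Real.arccos_lt_pi.2 (by linarith))).ne'
  -- Cayley–Hamilton: `(A - cos k)² = cos² k - 1`.
  have hJ : ((Real.sin k)⁻¹ • (A.1 - Real.cos k • 1)) * ((Real.sin k)⁻¹ • (A.1 - Real.cos k • 1))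
      = -1 := by
    have hdet := A.2
    rw [Matrix.det_fin_two] at hdet
    have hsq := Real.sin_sq_add_cos_sq k
    rw [Matrix.trace_fin_two] at hc
    ext i j
    fin_cases i <;> fin_cases j <;> simp [Matrix.mul_apply] <;> field_simp <;> grind
  obtain ⟨φ, hφ, hφJ⟩ := exists_continuous_circle_monoidHom hJ
  refine ⟨φ, Circle.exp k, hφ, Subtype.ext ?_⟩
  rw [hφJ, Circle.coe_exp, Complex.exp_ofReal_mul_I_re, Complex.exp_ofReal_mul_I_im, smul_smul,
    mul_inv_cancel₀ hsin, one_smul, add_sub_cancel]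

theorem inv_mem_topologicalClosure_of_abs_trace_lt_two {ι : Type*}
    {S : Submonoid (ι → SL(2, ℝ))} {A : ι → SL(2, ℝ)} (hA : ∀ j, |(A j).1.trace| < 2)
    (hS : A ∈ S) : A⁻¹ ∈ S.topologicalClosure := by
  choose φ z hφ hz using fun j => exists_continuous_circle_monoidHom_eq_of_abs_trace_lt_two (hA j)
  let Φ : (ι → Circle) →* (ι → SL(2, ℝ)) := MonoidHom.pi fun j => (φ j).comp (Pi.evalMonoidHom _ j)
  have hΦ : Continuous Φ := continuous_pi fun j => (hφ j).comp (continuous_apply j)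
  have hΦz : Φ z = A := funext hz
  have hcluster := (mapClusterPt_inv_atTop_pow.2 (mapClusterPt_self_atTop_pow z)).continuousAt_comp
    hΦ.continuousAt
  rw [map_inv, hΦz] at hcluster
  refine isClosed_closure.mem_of_mapClusterPt hcluster (.of_forall fun n => subset_closure ?_)
  simp only [Function.comp_apply, map_pow, hΦz]
  exact pow_mem hS n

end Elliptic

section Unipotent

variable {ι : Type*}

theorem coe_transvection_zero_one {R : Type*} [CommRing R] (t : R) :
    (transvection (zero_ne_one (α := Fin 2)) t).1 = !![1, t; 0, 1] := by
  ext a b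
  fin_cases a <;> fin_cases b <;> simp [Matrix.SpecialLinearGroup.transvection_coe]

theorem coe_transvection_one_zero {R : Type*} [CommRing R] (t : R) :
    (transvection (one_ne_zero (α := Fin 2)) t).1 = !![1, 0; t, 1] := by
  ext a b
  fin_cases a <;> fin_cases b <;> simp [Matrix.SpecialLinearGroup.transvection_coe]

theorem exists_transvection_one_zero_eq_conj (R : Type*) [CommRing R] :
    ∃ w : SL(2, R), ∀ t : R, transvection (one_ne_zero (α := Fin 2)) t =
      w * transvection zero_ne_one (-t) * w⁻¹ := by
  let w : SL(2, R) := ⟨!![0, 1; -1, 0], by simp⟩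
  refine ⟨w, fun t => eq_mul_inv_iff_mul_eq.2 (Subtype.ext ?_)⟩
  rw [Matrix.SpecialLinearGroup.coe_mul, Matrix.SpecialLinearGroup.coe_mul,
    coe_transvection_zero_one, coe_transvection_one_zero]
  simp [w]

/-- The families of upper unipotent matrices, indexed by their off-diagonal entries. -/
def upperUnipotent (f : ι → ℝ) : ι → SL(2, ℝ) := fun j =>
  transvection zero_ne_one (f j)

theorem coe_upperUnipotent (f : ι → ℝ) (j : ι) : (upperUnipotent f j).1 = !![1, f j; 0, 1] :=
  coe_transvection_zero_one (f j)

theorem upperUnipotent_add (f g : ι → ℝ) :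
    upperUnipotent (f + g) = upperUnipotent f * upperUnipotent g := by
  ext j a b
  fin_cases a <;> fin_cases b <;> simp [coe_upperUnipotent, add_comm]

theorem upperUnipotent_zero : upperUnipotent (0 : ι → ℝ) = 1 := by
  ext j a b
  fin_cases a <;> fin_cases b <;> simp [coe_upperUnipotent]

theorem upperUnipotent_neg (f : ι → ℝ) : upperUnipotent (-f) = (upperUnipotent f)⁻¹ :=
  eq_inv_of_mul_eq_one_left (by rw [← upperUnipotent_add, neg_add_cancel, upperUnipotent_zero])

theorem upperUnipotent_sq_smul {s : ℝ} (hs : s ≠ 0) (f : ι → ℝ) :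
    upperUnipotent (s ^ 2 • f) = Function.const ι (diag2 s hs) *
      upperUnipotent f * Function.const ι (diag2 s hs)⁻¹ := by
  refine funext fun j => Subtype.ext ?_
  simp only [Pi.mul_apply, Function.const_apply, Matrix.SpecialLinearGroup.coe_mul,
    Matrix.SpecialLinearGroup.coe_inv, coe_upperUnipotent, diag2_coe', Matrix.adjugate_fin_two_of,
    Matrix.mul_fin_two, Pi.smul_apply, smul_eq_mul]
  ring_nf
  simp only [mul_inv_cancel₀ hs]

variable {H : Subgroup (ι → SL(2, ℝ))} {f g : ι → ℝ}

theorem upperUnipotent_smul_mem (hconst : ∀ A, Function.const ι A ∈ H)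
    (hf : upperUnipotent f ∈ H) (t : ℝ) : upperUnipotent (t • f) ∈ H := by
  have hsq (s : ℝ) : upperUnipotent (s ^ 2 • f) ∈ H := by
    rcases eq_or_ne s 0 with rfl | hs
    · simp [upperUnipotent_zero, one_mem]
    · rw [upperUnipotent_sq_smul hs]
      exact mul_mem (mul_mem (hconst _) hf) (hconst _)
  rcases le_total 0 t with ht | ht
  · simpa [Real.sq_sqrt ht] using hsq √t
  · have := inv_mem (hsq √(-t))
    rwa [← upperUnipotent_neg, Real.sq_sqrt (neg_nonneg.2 ht), neg_smul, neg_neg] at this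

theorem upperUnipotent_mul_self_mem (hH : IsClosed (H : Set (ι → SL(2, ℝ))))
    (hconst : ∀ A, Function.const ι A ∈ H) (hf : upperUnipotent f ∈ H) :
    upperUnipotent (f * f) ∈ H := by
  let G : ℝ → ι → SL(2, ℝ) := fun x j =>
    ⟨!![1 - f j * x ^ 2, f j * f j; -x ^ 4, 1 + f j * x ^ 2], by
      rw [Matrix.det_fin_two_of]
      ring⟩
  have hG : Continuous G := continuous_pi fun j => by
    refine Continuous.subtype_mk (continuous_matrix fun a b => ?_) _
    fin_cases a <;> fin_cases b <;> dsimp <;> fun_prop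
  have hG0 : G 0 = upperUnipotent (f * f) := by
    ext j a b
    fin_cases a <;> fin_cases b <;> simp [G, coe_upperUnipotent]
  -- `G x` is a lower unipotent conjugated by `upperUnipotent f` and a contracting diagonal matrix.
  have hmem (x : ℝ) (hx : x ≠ 0) : G x ∈ H := by
    convert mul_mem (mul_mem (hconst (diag2 x hx)⁻¹)
      (mul_mem (mul_mem hf (hconst (transvection one_ne_zero (-x ^ 2))))
        (inv_mem hf))) (hconst (diag2 x hx)) using 1
    rw [← upperUnipotent_neg]
    ext j a b
    fin_cases a <;> fin_cases b <;>
      simp [G, coe_transvection_one_zero, coe_upperUnipotent, diag2_coe',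
        Matrix.adjugate_fin_two] <;> field_simp <;> ring
  have hlim : Tendsto G (𝓝[≠] 0) (𝓝 (upperUnipotent (f * f))) :=
    hG0 ▸ (hG.tendsto 0).mono_left nhdsWithin_le_nhds
  exact hH.mem_of_tendsto hlim (eventually_nhdsWithin_of_forall hmem)

theorem upperUnipotent_mul_mem (hH : IsClosed (H : Set (ι → SL(2, ℝ))))
    (hconst : ∀ A, Function.const ι A ∈ H) (hf : upperUnipotent f ∈ H)
    (hg : upperUnipotent g ∈ H) : upperUnipotent (f * g) ∈ H := by
  have hpolar : f * g = (1 / 2 : ℝ) • ((f + g) * (f + g) + -(f * f) + -(g * g)) := by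
    ext j
    simp only [Pi.smul_apply, Pi.add_apply, Pi.neg_apply, Pi.mul_apply, smul_eq_mul]
    ring
  rw [hpolar]
  refine upperUnipotent_smul_mem hconst ?_ _
  have hsum : upperUnipotent (f + g) ∈ H := upperUnipotent_add f g ▸ mul_mem hf hg
  simp only [upperUnipotent_add _ (-_), upperUnipotent_neg]
  exact mul_mem (mul_mem (upperUnipotent_mul_self_mem hH hconst hsum)
    (inv_mem (upperUnipotent_mul_self_mem hH hconst hf)))
    (inv_mem (upperUnipotent_mul_self_mem hH hconst hg))

/-- The functions `f` for which `upperUnipotent f` lies in a closed subgroup containing the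
constants; squares are limits of conjugates, and products come from squares by polarization. -/
def unipotentSubalgebra (hH : IsClosed (H : Set (ι → SL(2, ℝ))))
    (hconst : ∀ A, Function.const ι A ∈ H) : Subalgebra ℝ (ι → ℝ) where
  carrier := {f | upperUnipotent f ∈ H}
  add_mem' := fun {f g} hf hg => (upperUnipotent_add f g ▸ mul_mem hf hg : _ ∈ H)
  mul_mem' := fun hf hg => upperUnipotent_mul_mem hH hconst hf hg
  algebraMap_mem' := fun t => hconst (transvection zero_ne_one t)

theorem subalgebra_eq_top_of_injective_mem {K : Type*} [Field K] [Finite ι]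
    {S : Subalgebra K (ι → K)} {f : ι → K} (hf : Function.Injective f) (hfS : f ∈ S) : S = ⊤ := by
  classical
  have := Fintype.ofFinite ι
  refine Algebra.eq_top_iff.2 fun g => ?_
  have haeval : Polynomial.aeval f (Lagrange.interpolate Finset.univ f g) = g := by
    ext j
    rw [Polynomial.aeval_fn_apply, Polynomial.coe_aeval_eq_eval,
      Lagrange.eval_interpolate_at_node g hf.injOn (Finset.mem_univ j)]
  exact haeval ▸ Algebra.adjoin_le (Set.singleton_subset_iff.2 hfS)
    (Polynomial.aeval_mem_adjoin_singleton K f)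

theorem subgroup_eq_top_of_injective_upperUnipotent_mem [Finite ι]
    (hH : IsClosed (H : Set (ι → SL(2, ℝ)))) (hconst : ∀ A, Function.const ι A ∈ H)
    (hf : Function.Injective f) (hfH : upperUnipotent f ∈ H) : H = ⊤ := by
  classical
  have hU (g : ι → ℝ) : upperUnipotent g ∈ H := by
    have hS : unipotentSubalgebra hH hconst = ⊤ := subalgebra_eq_top_of_injective_mem hf hfH
    exact (hS ▸ Algebra.mem_top : g ∈ unipotentSubalgebra hH hconst)
  have hupper (j : ι) (t : ℝ) : Pi.mulSingle j
      (transvection (zero_ne_one (α := Fin 2)) t) ∈ H := by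
    convert hU (Pi.single j t)
    ext i : 1
    rcases eq_or_ne i j with rfl | hij <;> simp [upperUnipotent, *]
  refine eq_top_iff.2 fun g _ => Subgroup.pi_mem_of_mulSingle_mem g fun j => ?_
  refine Matrix.SL2.transvection_induction (fun A => Pi.mulSingle j A ∈ H)
    (fun a b hab t => ?_) (fun A B hA hB => ?_) (g j)
  · obtain ⟨rfl, rfl⟩ | ⟨rfl, rfl⟩ : a = 0 ∧ b = 1 ∨ a = 1 ∧ b = 0 := by omega
    · exact hupper j t
    · obtain ⟨w, hw⟩ := exists_transvection_one_zero_eq_conj ℝ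
      have hconj : Pi.mulSingle j (transvection hab t) = Function.const ι w *
          Pi.mulSingle j (transvection zero_ne_one (-t)) * Function.const ι w⁻¹ := by
        ext i : 1
        rcases eq_or_ne i j with rfl | hij <;> simp [*]
      exact hconj ▸ mul_mem (mul_mem (hconst w) (hupper j (-t))) (hconst w⁻¹)
  · rw [Pi.mulSingle_mul]
    exact mul_mem hA hB

end Unipotent

section TransferMonoid

variable {ι : Type*} {E : ι → ℝ}

/-- The one-step transfer matrix of `u (n + 1) + u (n - 1) + v * u n = e * u n`, acting on
column vectors `(u n, u (n - 1))`. -/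
def transferMatrix (e v : ℝ) : SL(2, ℝ) := ⟨!![e - v, -1; 1, 0], by simp⟩

/-- The products of transfer matrices along finite potentials, simultaneously at all energies
`E j`. -/
def transferMonoid (E : ι → ℝ) : Submonoid (ι → SL(2, ℝ)) :=
  Submonoid.closure (Set.range fun v j => transferMatrix (E j) v)

theorem coe_transferMatrix (e v : ℝ) : (transferMatrix e v).1 = !![e - v, -1; 1, 0] := rfl

theorem transferMatrix_smul (e v : ℝ) (x : Fin 2 → ℝ) :
    transferMatrix e v • x = ![(e - v) * x 0 - x 1, x 0] := by
  ext i
  fin_cases i <;>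
    simp [Matrix.SpecialLinearGroup.smul_def, coe_transferMatrix, Matrix.vecHead, Matrix.vecTail,
      sub_eq_add_neg]

theorem transferMatrix_mem_transferMonoid (v : ℝ) :
    (fun j => transferMatrix (E j) v) ∈ transferMonoid E :=
  Submonoid.subset_closure (Set.mem_range_self v)

theorem transferMatrix_eq_transvection_zero_one_mul (e v : ℝ) :
    transferMatrix e v = transvection zero_ne_one (-v) * transferMatrix e 0 := by
  ext a b
  fin_cases a <;> fin_cases b <;>
    simp [coe_transferMatrix, coe_transvection_zero_one, sub_eq_add_neg]

theorem transferMatrix_add (e v t : ℝ) :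
    transferMatrix e (v + t) = transferMatrix e v * transvection one_ne_zero t := by
  refine Subtype.ext ?_
  simp only [Matrix.SpecialLinearGroup.coe_mul, coe_transferMatrix, coe_transvection_one_zero,
    Matrix.mul_fin_two]
  ring_nf

theorem inv_transferMatrix_eq (e v : ℝ) :
    (transferMatrix e v)⁻¹ = (transferMatrix e 0)⁻¹ * transferMatrix e (-v) *
      (transferMatrix e 0)⁻¹ := by
  rw [transferMatrix_eq_transvection_zero_one_mul e v,
    transferMatrix_eq_transvection_zero_one_mul e (-v), mul_inv_rev, ← mul_assoc,
    mul_inv_cancel_right, Matrix.SpecialLinearGroup.transvection_inv, neg_neg]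

theorem inv_transferMatrix_mem_topologicalClosure (hE : ∀ j, E j ∈ Set.Ioo (-2 : ℝ) 2) (v : ℝ) :
    (fun j => transferMatrix (E j) v)⁻¹ ∈ (transferMonoid E).topologicalClosure := by
  have hinv : (fun j => transferMatrix (E j) 0)⁻¹ ∈ (transferMonoid E).topologicalClosure :=
    inv_mem_topologicalClosure_of_abs_trace_lt_two
      (fun j => by simpa [coe_transferMatrix, Matrix.trace_fin_two] using abs_lt.2 (hE j))
      (transferMatrix_mem_transferMonoid 0)
  rw [show (fun j => transferMatrix (E j) v)⁻¹ = _ from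
    funext fun j => inv_transferMatrix_eq (E j) v]
  exact mul_mem (mul_mem hinv ((transferMonoid E).le_topologicalClosure
    (transferMatrix_mem_transferMonoid (-v)))) hinv

/-- The closure of `transferMonoid E`, which is a group because the transfer matrices at energies
in `(-2, 2)` and potential `0` are elliptic. -/
def transferGroup (hE : ∀ j, E j ∈ Set.Ioo (-2 : ℝ) 2) : Subgroup (ι → SL(2, ℝ)) where
  toSubmonoid := (transferMonoid E).topologicalClosure
  inv_mem' := by
    have hle : (transferMonoid E).topologicalClosure ≤ (transferMonoid E).topologicalClosure⁻¹ :=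
      Submonoid.topologicalClosure_minimal _
        (Submonoid.closure_le.2 (Set.range_subset_iff.2
          (inv_transferMatrix_mem_topologicalClosure hE)))
        (isClosed_closure.preimage continuous_inv)
    exact fun {g} hg => hle hg

theorem transferMatrix_mem_transferGroup (hE : ∀ j, E j ∈ Set.Ioo (-2 : ℝ) 2) (v : ℝ) :
    (fun j => transferMatrix (E j) v) ∈ transferGroup hE :=
  subset_closure (transferMatrix_mem_transferMonoid v)

theorem const_mem_transferGroup (hE : ∀ j, E j ∈ Set.Ioo (-2 : ℝ) 2) (A : SL(2, ℝ)) :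
    Function.const ι A ∈ transferGroup hE := by
  refine Matrix.SL2.transvection_induction (fun A => Function.const ι A ∈ transferGroup hE)
    (fun a b hab t => ?_) (fun A B hA hB => mul_mem hA hB) A
  have h0 := inv_mem (transferMatrix_mem_transferGroup hE 0)
  obtain ⟨rfl, rfl⟩ | ⟨rfl, rfl⟩ : a = 0 ∧ b = 1 ∨ a = 1 ∧ b = 0 := by omega
  · convert mul_mem (transferMatrix_mem_transferGroup hE (-t)) h0
    ext j : 1
    simp [transferMatrix_eq_transvection_zero_one_mul _ (-t)]
  · convert mul_mem h0 (transferMatrix_mem_transferGroup hE t)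
    ext j : 1
    simpa using eq_inv_mul_of_mul_eq (transferMatrix_add (E j) 0 t).symm

theorem dense_transferMonoid [Finite ι] (hE : ∀ j, E j ∈ Set.Ioo (-2 : ℝ) 2)
    (hEinj : Function.Injective E) : Dense (transferMonoid E : Set (ι → SL(2, ℝ))) := by
  have hEmem : upperUnipotent E ∈ transferGroup hE := by
    convert mul_mem (transferMatrix_mem_transferGroup hE 0)
      (const_mem_transferGroup hE (transferMatrix 0 0)⁻¹)
    ext j : 1
    rw [Pi.mul_apply, Function.const_apply, eq_mul_inv_iff_mul_eq]
    ext a b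
    fin_cases a <;> fin_cases b <;> simp [coe_transferMatrix, coe_upperUnipotent]
  have htop : transferGroup hE = ⊤ := subgroup_eq_top_of_injective_upperUnipotent_mem
    isClosed_closure (const_mem_transferGroup hE) hEinj hEmem
  exact fun g => (htop ▸ Subgroup.mem_top g : g ∈ transferGroup hE)

end TransferMonoid

section DenseOrbit

theorem mem_orbit_of_dense_of_mem_nhds {G X : Type*} [Group G] [TopologicalSpace G]
    [ContinuousInv G] [TopologicalSpace X] [MulAction G X] [ContinuousSMul G X]
    {S : Submonoid G} (hS : Dense (S : Set G)) {x y : X} {g : G}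
    (h : MulAction.orbit S x ∈ 𝓝 (g • y)) : y ∈ MulAction.orbit S x := by
  have hcont : ContinuousAt (fun k : G => k⁻¹ • y) g⁻¹ := by fun_prop
  rw [← inv_inv g] at h
  obtain ⟨s, ⟨t, hst⟩, hs⟩ := mem_closure_iff_nhds.1 (hS g⁻¹) _ (hcont h)
  refine ⟨⟨s, hs⟩ * t, ?_⟩
  simp only [mul_smul, hst, Submonoid.mk_smul, smul_inv_smul]

end DenseOrbit

section VectorFamilies

instance continuousSMul_specialLinearGroup {n R : Type*} [Fintype n] [DecidableEq n] [CommRing R]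
    [TopologicalSpace R] [IsTopologicalRing R] :
    ContinuousSMul (Matrix.SpecialLinearGroup n R) (n → R) where
  continuous_smul :=
    (continuous_subtype_val.comp continuous_fst).matrix_mulVec continuous_snd

instance smulCommClass_pi_specialLinearGroup {ι n R : Type*} [Fintype n] [DecidableEq n]
    [CommRing R] : SMulCommClass (ι → Matrix.SpecialLinearGroup n R) R (ι → n → R) :=
  ⟨fun g c x => funext fun j => smul_comm (g j) c (x j)⟩

theorem exists_smul_eq_of_ne_zero {K : Type*} [Field K] {x y : Fin 2 → K} (hx : x ≠ 0)
    (hy : y ≠ 0) : ∃ g : SL(2, K), g • x = y := by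
  have key {z : Fin 2 → K} (hz : z ≠ 0) : ∃ g : SL(2, K), g • ![1, 0] = z := by
    have hcop : IsCoprime (z 0) (z 1) := by
      by_cases h0 : z 0 = 0
      · have h1 : z 1 ≠ 0 := fun h1 => hz <| by
          ext i
          fin_cases i <;> assumption
        exact ⟨0, (z 1)⁻¹, by simp [h1]⟩
      · exact ⟨(z 0)⁻¹, 0, by simp [h0]⟩
    obtain ⟨g, h0, h1⟩ := hcop.exists_SL2_col 0
    refine ⟨g, ?_⟩
    ext i
    fin_cases i <;> simp [Matrix.SpecialLinearGroup.smul_def, *]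
  obtain ⟨g, rfl⟩ := key hx
  obtain ⟨h, rfl⟩ := key hy
  exact ⟨h * g⁻¹, by rw [mul_smul, inv_smul_smul]⟩

theorem smul_apply_zero_eq {R : Type*} [CommRing R] (g : SL(2, R)) (x : Fin 2 → R) :
    (g • x) 0 = (g⁻¹ • ![0, 1]) 1 * x 0 - (g⁻¹ • ![0, 1]) 0 * x 1 := by
  simp [Matrix.SpecialLinearGroup.smul_def, Matrix.adjugate_fin_two, Matrix.vecHead,
    Matrix.vecTail]

theorem submodule_eq_top_of_forall_apply_ne_zero_mem {K M : Type*} [Field K] [AddCommGroup M]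
    [Module K M] {D : Submodule K M} {ℓ : M →ₗ[K] K} (hℓ : ℓ ≠ 0) (hD : ∀ w, ℓ w ≠ 0 → w ∈ D) :
    D = ⊤ := by
  obtain ⟨u, hu⟩ := DFunLike.ne_iff.1 hℓ
  refine Submodule.eq_top_iff'.2 fun w => ?_
  by_cases hw : ℓ w = 0
  · simpa using D.sub_mem (hD (w + u) (by simpa [hw] using hu)) (hD u hu)
  · exact hD w hw

theorem submodule_eq_top_of_forall_det_smul_mem {ι K : Type*} [Finite ι] [Field K]
    {D : Submodule K (ι → Fin 2 → K)} {x : ι → Fin 2 → K} (hx : ∀ j, x j ≠ 0)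
    (hD : ∀ w : ι → Fin 2 → K, (∀ j, w j ≠ 0) →
      (fun j => (w j 1 * x j 0 - w j 0 * x j 1) • w j) ∈ D) : D = ⊤ := by
  classical
  have := Fintype.ofFinite ι
  have hsingle (j : ι) : D.comap (LinearMap.single K _ j) = ⊤ := by
    let ℓ : (Fin 2 → K) →ₗ[K] K := x j 0 • LinearMap.proj 1 - x j 1 • LinearMap.proj 0
    have hℓ : ℓ ≠ 0 := fun h => hx j <| by
      ext i
      fin_cases i
      · simpa [ℓ] using LinearMap.congr_fun h ![0, 1]
      · simpa [ℓ] using LinearMap.congr_fun h ![1, 0]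
    refine submodule_eq_top_of_forall_apply_ne_zero_mem hℓ fun w hw => ?_
    have hmem := hD (Function.update x j w) fun i => by
      rcases eq_or_ne i j with rfl | hij
      · rw [Function.update_self]
        rintro rfl
        simp at hw
      · rw [Function.update_of_ne hij]
        exact hx i
    have heq : (fun i => (Function.update x j w i 1 * x i 0 - Function.update x j w i 0 * x i 1) •
        Function.update x j w i) = ℓ w • Pi.single j w := by
      ext i : 1
      rcases eq_or_ne i j with rfl | hij
      · simp [ℓ, mul_comm]
      · simp [hij, mul_comm]
    exact (D.smul_mem_iff hw).1 (heq ▸ hmem)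
  refine Submodule.eq_top_iff'.2 fun y => ?_
  rw [← Finset.univ_sum_single y]
  exact D.sum_mem fun j _ =>
    (hsingle j ▸ Submodule.mem_top : y j ∈ D.comap (LinearMap.single K _ j))

end VectorFamilies

section Transitivity

variable {ι : Type*} {E : ι → ℝ} {x : ι → Fin 2 → ℝ}

/-- The derivative at `t = 0` of the action of the lower unipotent matrices with entry `t`. -/
def lowerShear (ι : Type*) : (ι → Fin 2 → ℝ) →L[ℝ] (ι → Fin 2 → ℝ) :=
  ContinuousLinearMap.piMap fun _ => (ContinuousLinearMap.proj 0).smulRight ![0, 1]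

theorem lowerShear_apply (x : ι → Fin 2 → ℝ) (j : ι) : lowerShear ι x j = x j 0 • ![0, 1] := rfl

theorem transferMatrix_add_smul (E : ι → ℝ) (v t : ℝ) (x : ι → Fin 2 → ℝ) :
    (fun j => transferMatrix (E j) (v + t)) • x =
      (fun j => transferMatrix (E j) v) • (x + t • lowerShear ι x) := by
  ext j : 1
  simp only [Pi.smul_apply', transferMatrix_smul, Pi.add_apply, Pi.smul_apply, lowerShear_apply,
    smul_eq_mul, Matrix.cons_val_zero, Matrix.cons_val_one]
  ring_nf

/-- The vectors `g • d`, `d ∈ D`, are tangent at `g • x` to the orbit of `x` under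
`transferMonoid E`, all along a single patch: the image of a map into the orbit that is strictly
differentiable at a preimage of `g • x` and whose derivative there attains these vectors. -/
def HasOrbitTangents (E : ι → ℝ) (x : ι → Fin 2 → ℝ) (g : ι → SL(2, ℝ))
    (D : Submodule ℝ (ι → Fin 2 → ℝ)) : Prop :=
  ∃ (P : Type) (_ : NormedAddCommGroup P) (_ : NormedSpace ℝ P) (_ : CompleteSpace P)
    (F : P → ι → Fin 2 → ℝ) (F' : P →L[ℝ] ι → Fin 2 → ℝ) (p : P),
    HasStrictFDerivAt F F' p ∧ F p = g • x ∧ (∀ d ∈ D, ∃ q, F' q = g • d) ∧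
      ∀ q, F q ∈ MulAction.orbit (transferMonoid E) x

theorem hasOrbitTangents_one_bot (E : ι → ℝ) (x : ι → Fin 2 → ℝ) : HasOrbitTangents E x 1 ⊥ :=
  ⟨PUnit, inferInstance, inferInstance, inferInstance, fun _ => x, 0, PUnit.unit,
    hasStrictFDerivAt_const _ _, (one_smul _ x).symm,
    fun d hd => ⟨0, by simp [(Submodule.mem_bot ℝ).1 hd]⟩,
    fun _ => MulAction.mem_orbit_self x⟩

variable [Finite ι]

theorem HasOrbitTangents.transferMatrix_mul {g : ι → SL(2, ℝ)}
    {D : Submodule ℝ (ι → Fin 2 → ℝ)} (h : HasOrbitTangents E x g D) (v : ℝ) :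
    HasOrbitTangents E x ((fun j => transferMatrix (E j) v) * g)
      (D ⊔ Submodule.span ℝ {g⁻¹ • lowerShear ι (g • x)}) := by
  have := Fintype.ofFinite ι
  obtain ⟨P, _, _, _, F, F', p, hF, hFp, hD, horbit⟩ := h
  set T : ι → SL(2, ℝ) := fun j => transferMatrix (E j) v
  let L : (ι → Fin 2 → ℝ) →L[ℝ] (ι → Fin 2 → ℝ) :=
    (ContinuousLinearEquiv.smulLeft T : (ι → Fin 2 → ℝ) ≃L[ℝ] (ι → Fin 2 → ℝ))
  have hF₂ : HasStrictFDerivAt (fun q : P × ℝ => F q.1 + q.2 • lowerShear ι (F q.1))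
      (F'.coprod (ContinuousLinearMap.toSpanSingleton ℝ (lowerShear ι (F p)))) (p, 0) := by
    have hfst : HasStrictFDerivAt (fun q : P × ℝ => F q.1) (F'.comp (.fst ℝ P ℝ)) (p, 0) :=
      HasStrictFDerivAt.comp (g := F) (p, 0) hF hasStrictFDerivAt_fst
    refine (hfst.add (hasStrictFDerivAt_snd.smul
      ((lowerShear ι).hasStrictFDerivAt.comp (p, (0 : ℝ)) hfst))).congr_fderiv ?_
    ext <;> simp
  refine ⟨P × ℝ, inferInstance, inferInstance, inferInstance, _, _, (p, 0),
    L.hasStrictFDerivAt.comp (p, (0 : ℝ)) hF₂, ?_, ?_, ?_⟩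
  · simp [L, hFp, mul_smul]
  · intro d hd
    obtain ⟨d₀, hd₀, _, hs, rfl⟩ := Submodule.mem_sup.1 hd
    obtain ⟨s, rfl⟩ := Submodule.mem_span_singleton.1 hs
    obtain ⟨q, hq⟩ := hD d₀ hd₀
    refine ⟨(q, s), ?_⟩
    simp [L, hq, hFp, mul_smul, smul_comm g s]
  · rintro ⟨q, s⟩
    obtain ⟨k, hk⟩ := horbit q
    refine ⟨⟨_, transferMatrix_mem_transferMonoid (v + s)⟩ * k, ?_⟩
    simp only [mul_smul, hk, Submonoid.mk_smul, transferMatrix_add_smul]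
    rfl

theorem exists_hasOrbitTangents_forall_mem (E : ι → ℝ) (x : ι → Fin 2 → ℝ) :
    ∃ g D, HasOrbitTangents E x g D ∧
      ∀ h ∈ transferMonoid E, (h * g)⁻¹ • lowerShear ι ((h * g) • x) ∈ D := by
  obtain ⟨D, ⟨g, hg⟩, hmax⟩ :=
    wellFounded_gt.has_min {D | ∃ g, HasOrbitTangents E x g D} ⟨⊥, 1, hasOrbitTangents_one_bot E x⟩
  have hstep {k : ι → SL(2, ℝ)} (hk : HasOrbitTangents E x k D) (v : ℝ) :
      k⁻¹ • lowerShear ι (k • x) ∈ D ∧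
        HasOrbitTangents E x ((fun j => transferMatrix (E j) v) * k) D := by
    have hk' := hk.transferMatrix_mul v
    have heq : D = _ := eq_of_le_of_not_lt le_sup_left (hmax _ ⟨_, hk'⟩)
    rw [← heq] at hk'
    exact ⟨sup_eq_left.1 heq.symm (Submodule.mem_span_singleton_self _), hk'⟩
  have hmonoid : ∀ h ∈ transferMonoid E, HasOrbitTangents E x (h * g) D := by
    intro h hh
    induction hh using Submonoid.closure_induction_left with
    | one => rwa [one_mul]
    | mul_left a ha b _ ih =>
      obtain ⟨v, rfl⟩ := ha
      exact mul_assoc _ b g ▸ (hstep ih v).2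
  exact ⟨g, D, hg, fun h hh => (hstep (hmonoid h hh) 0).1⟩

theorem submodule_eq_top_of_forall_inv_smul_lowerShear_mem {D : Submodule ℝ (ι → Fin 2 → ℝ)}
    (hx : ∀ j, x j ≠ 0) (hD : ∀ g : ι → SL(2, ℝ), g⁻¹ • lowerShear ι (g • x) ∈ D) : D = ⊤ := by
  refine submodule_eq_top_of_forall_det_smul_mem hx fun w hw => ?_
  choose g hg using fun j =>
    exists_smul_eq_of_ne_zero (x := ![0, 1]) (fun h => one_ne_zero (congr_fun h 1)) (hw j)
  convert hD g⁻¹ using 1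
  ext j : 1
  simp only [Pi.smul_apply', Pi.inv_apply, inv_inv, lowerShear_apply, smul_comm (g j)]
  rw [smul_apply_zero_eq, inv_inv, hg]

theorem mem_orbit_transferMonoid (hE : ∀ j, E j ∈ Set.Ioo (-2 : ℝ) 2)
    (hEinj : Function.Injective E) (hx : ∀ j, x j ≠ 0) {y : ι → Fin 2 → ℝ} (hy : ∀ j, y j ≠ 0) :
    y ∈ MulAction.orbit (transferMonoid E) x := by
  have := Fintype.ofFinite ι
  have hdense := dense_transferMonoid hE hEinj
  obtain ⟨g, D, ⟨P, _, _, _, F, F', p, hF, hFp, hrange, horbit⟩, hD⟩ :=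
    exists_hasOrbitTangents_forall_mem E x
  have hDtop : D = ⊤ := by
    refine submodule_eq_top_of_forall_inv_smul_lowerShear_mem hx fun k => ?_
    have hclosed : IsClosed {h : ι → SL(2, ℝ) | (h * g)⁻¹ • lowerShear ι ((h * g) • x) ∈ D} :=
      D.closed_of_finiteDimensional.preimage (by fun_prop)
    simpa using hclosed.closure_subset_iff.2 hD (hdense (k * g⁻¹))
  have hsurj : F'.range = ⊤ := LinearMap.range_eq_top.2 fun z => by
    simpa using hrange (g⁻¹ • z) (hDtop ▸ Submodule.mem_top)
  have hnhds : MulAction.orbit (transferMonoid E) x ∈ 𝓝 (g • x) := by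
    rw [← hFp, ← hF.map_nhds_eq_of_surj hsurj]
    exact Filter.mem_map.2 (Filter.univ_mem' horbit)
  choose k hk using fun j => exists_smul_eq_of_ne_zero (hy j) (hx j)
  exact mem_orbit_of_dense_of_mem_nhds hdense (g := g * k) <| by
    rwa [mul_smul, show k • y = x from funext hk]

end Transitivity

section BoundedPartialSums

/-- The partial sums of `f` are bounded; then `f` has mean zero, with the best possible rate. -/
def HasBoundedPartialSums {X : Type*} [SeminormedAddCommGroup X] (f : ℕ → X) : Prop :=
  ∃ C, ∀ n, ‖∑ i ∈ Finset.range n, f i‖ ≤ C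

namespace HasBoundedPartialSums

variable {X Y : Type*} [SeminormedAddCommGroup X] [SeminormedAddCommGroup Y] {f g : ℕ → X}

theorem add (hf : HasBoundedPartialSums f) (hg : HasBoundedPartialSums g) :
    HasBoundedPartialSums (f + g) := by
  obtain ⟨C, hC⟩ := hf
  obtain ⟨D, hD⟩ := hg
  refine ⟨C + D, fun n => ?_⟩
  simp only [Pi.add_apply, Finset.sum_add_distrib]
  exact norm_add_le_of_le (hC n) (hD n)

theorem sum {ι : Type*} {s : Finset ι} {f : ι → ℕ → X}
    (hf : ∀ i ∈ s, HasBoundedPartialSums (f i)) :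
    HasBoundedPartialSums fun n => ∑ i ∈ s, f i n := by
  choose! C hC using hf
  refine ⟨∑ i ∈ s, C i, fun n => ?_⟩
  rw [Finset.sum_comm]
  exact norm_sum_le_of_le _ fun i hi => hC i hi n

theorem map {𝕜 : Type*} [NontriviallyNormedField 𝕜] [NormedSpace 𝕜 X] [NormedSpace 𝕜 Y]
    (hf : HasBoundedPartialSums f) (L : X →L[𝕜] Y) : HasBoundedPartialSums fun n => L (f n) := by
  obtain ⟨C, hC⟩ := hf
  refine ⟨‖L‖ * C, fun n => ?_⟩
  rw [← map_sum]
  exact L.le_opNorm_of_le (hC n)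

end HasBoundedPartialSums

theorem hasBoundedPartialSums_pow_succ_sub {z : ℂ} (hz : ‖z‖ = 1) :
    HasBoundedPartialSums fun n => z ^ (n + 1) - if z = 1 then 1 else 0 := by
  split_ifs with h
  · exact ⟨0, fun N => by simp [h]⟩
  · refine ⟨(1 + 1) / ‖z - 1‖, fun N => ?_⟩
    simp only [sub_zero, pow_succ]
    rw [← Finset.sum_mul, geom_sum_eq h, norm_mul, hz, mul_one, norm_div]
    gcongr
    exact norm_sub_le_of_le (by simp [hz]) norm_one.le

end BoundedPartialSums

section Averaging

variable {W : Type*} [NormedAddCommGroup W] [NormedSpace ℝ W] {M M' Q : W →L[ℝ] W} {a a' : W}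
  {τ τ' B : ℝ}

theorem norm_averaging_step_le (hτ : 0 ≤ τ) (hτ1 : τ ≤ 1) (hτ' : |τ - τ'| ≤ τ ^ 2) (hM : ‖M‖ ≤ B)
    (hM' : ‖M'‖ ≤ B) (h : a' - a = τ • (M' - M + Q) a) :
    ‖(a' - τ' • M' a') - (a - τ • M a) - τ • Q (a - τ • M a)‖ ≤
      τ ^ 2 * (B * (1 + 4 * B + 3 * ‖Q‖) * ‖a‖) := by
  have hB : 0 ≤ B := (norm_nonneg _).trans hM
  have hdiff : ‖a' - a‖ ≤ τ * ((2 * B + ‖Q‖) * ‖a‖) := by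
    rw [h, norm_smul, Real.norm_of_nonneg hτ]
    gcongr
    refine (ContinuousLinearMap.le_opNorm _ a).trans ?_
    gcongr
    exact norm_add_le_of_le ((norm_sub_le_of_le hM' hM).trans_eq (two_mul B).symm) le_rfl
  have ha' : ‖a'‖ ≤ (1 + 2 * B + ‖Q‖) * ‖a‖ :=
    calc ‖a'‖ = ‖a + (a' - a)‖ := by rw [add_sub_cancel]
      _ ≤ ‖a‖ + 1 * ((2 * B + ‖Q‖) * ‖a‖) := norm_add_le_of_le le_rfl (hdiff.trans (by gcongr))
      _ = (1 + 2 * B + ‖Q‖) * ‖a‖ := by ring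
  -- The terms of first order in `τ` cancel.
  have hsecond : (a' - τ' • M' a') - (a - τ • M a) - τ • Q (a - τ • M a) =
      (τ - τ') • M' a' - τ • M' (a' - a) + τ ^ 2 • Q (M a) := by
    rw [sub_sub_sub_comm, map_sub M', h]
    simp only [map_sub, map_smul, add_apply, sub_apply]
    module
  calc ‖(a' - τ' • M' a') - (a - τ • M a) - τ • Q (a - τ • M a)‖
      ≤ τ ^ 2 * (B * ((1 + 2 * B + ‖Q‖) * ‖a‖)) + τ * (B * (τ * ((2 * B + ‖Q‖) * ‖a‖))) +
        τ ^ 2 * (‖Q‖ * (B * ‖a‖)) := by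
        rw [hsecond]
        refine norm_add_le_of_le (norm_sub_le_of_le ?_ ?_) ?_
        all_goals rw [norm_smul]
        · exact mul_le_mul hτ' (M'.le_of_opNorm_le_of_le hM' ha') (norm_nonneg _) (sq_nonneg τ)
        · rw [Real.norm_of_nonneg hτ]
          gcongr
          exact M'.le_of_opNorm_le_of_le hM' hdiff
        · rw [Real.norm_of_nonneg (sq_nonneg τ)]
          gcongr
          exact Q.le_opNorm_of_le (M.le_of_opNorm_le hM a)
    _ = τ ^ 2 * (B * (1 + 4 * B + 3 * ‖Q‖) * ‖a‖) := by ring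

theorem norm_le_two_mul_norm_sub_smul (hτ : 0 ≤ τ) (hM : ‖M‖ ≤ B) (hB : 2 * B * τ ≤ 1) :
    ‖a‖ ≤ 2 * ‖a - τ • M a‖ := by
  have hMa : ‖τ • M a‖ ≤ τ * (B * ‖a‖) := by
    rw [norm_smul, Real.norm_of_nonneg hτ]
    gcongr
    exact M.le_of_opNorm_le hM a
  nlinarith [norm_nonneg a, norm_sub_norm_le a (τ • M a)]

theorem norm_averaging_step_le_half_mul (hτ : 0 ≤ τ) (hτ1 : τ ≤ 1) (hτ' : |τ - τ'| ≤ τ ^ 2)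
    (hM : ‖M‖ ≤ B) (hM' : ‖M'‖ ≤ B) (hB : 2 * B * τ ≤ 1)
    (hQ : 4 * (B * (1 + 4 * B + 3 * ‖Q‖)) * τ ≤ 1) (h : a' - a = τ • (M' - M + Q) a) :
    ‖(a' - τ' • M' a') - (a - τ • M a) - τ • Q (a - τ • M a)‖ ≤ τ / 2 * ‖a - τ • M a‖ := by
  have hB0 : 0 ≤ B := (norm_nonneg _).trans hM
  calc ‖(a' - τ' • M' a') - (a - τ • M a) - τ • Q (a - τ • M a)‖
      ≤ τ ^ 2 * (B * (1 + 4 * B + 3 * ‖Q‖) * ‖a‖) := norm_averaging_step_le hτ hτ1 hτ' hM hM' h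
    _ ≤ τ ^ 2 * (B * (1 + 4 * B + 3 * ‖Q‖) * (2 * ‖a - τ • M a‖)) := by
        gcongr
        exact norm_le_two_mul_norm_sub_smul hτ hM hB
    _ = τ / 2 * (4 * (B * (1 + 4 * B + 3 * ‖Q‖)) * τ) * ‖a - τ • M a‖ := by ring
    _ ≤ τ / 2 * ‖a - τ • M a‖ := by
        gcongr
        exact mul_le_of_le_one_right (by positivity) hQ

end Averaging

section Cone

variable {y y' : ℂ} {t : ℝ}

theorem abs_re_lt_abs_im_of_step (ht : 0 ≤ t) (ht1 : t ≤ 1)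
    (h : ‖y' - y + t * conj y‖ ≤ t / 4 * ‖y‖) (hy : |y.re| < |y.im|) : |y'.re| < |y'.im| := by
  have hre := (Complex.abs_re_le_norm _).trans h
  have him := (Complex.abs_im_le_norm _).trans h
  simp only [Complex.add_re, Complex.sub_re, Complex.re_ofReal_mul, Complex.conj_re,
    Complex.add_im, Complex.sub_im, Complex.im_ofReal_mul, Complex.conj_im] at hre him
  have hnorm : t / 4 * ‖y‖ ≤ t / 2 * |y.im| := by
    nlinarith [Complex.norm_le_abs_re_add_abs_im y]
  have hre' : |y'.re| ≤ (1 - t) * |y.re| + t / 2 * |y.im| := by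
    calc |y'.re| = |(1 - t) * y.re + (y'.re - y.re + t * y.re)| := by ring_nf
      _ ≤ (1 - t) * |y.re| + |y'.re - y.re + t * y.re| := by
        rw [← abs_of_nonneg (sub_nonneg.2 ht1), ← abs_mul, abs_of_nonneg (sub_nonneg.2 ht1)]
        exact abs_add_le _ _
      _ ≤ _ := by linarith
  have him' : (1 + t) * |y.im| ≤ |y'.im| + t / 2 * |y.im| := by
    calc (1 + t) * |y.im| = |y'.im - (y'.im - y.im + t * -y.im)| := by
          rw [← abs_of_nonneg (by linarith : 0 ≤ 1 + t), ← abs_mul]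
          ring_nf
      _ ≤ |y'.im| + |y'.im - y.im + t * -y.im| := abs_sub _ _
      _ ≤ _ := by linarith
  nlinarith [mul_nonneg ht (abs_nonneg y.re)]

theorem abs_re_le_of_step (ht : 0 ≤ t) (ht1 : t ≤ 1)
    (h : ‖y' - y + t * conj y‖ ≤ t / 4 * ‖y‖) (hy : |y.im| ≤ |y.re|) :
    |y'.re| ≤ (1 - t / 2) * |y.re| := by
  have hre := (Complex.abs_re_le_norm _).trans h
  simp only [Complex.add_re, Complex.sub_re, Complex.re_ofReal_mul, Complex.conj_re] at hre
  have hnorm : t / 4 * ‖y‖ ≤ t / 2 * |y.re| := by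
    nlinarith [Complex.norm_le_abs_re_add_abs_im y]
  calc |y'.re| = |(1 - t) * y.re + (y'.re - y.re + t * y.re)| := by ring_nf
    _ ≤ |(1 - t) * y.re| + |y'.re - y.re + t * y.re| := abs_add_le _ _
    _ ≤ (1 - t / 2) * |y.re| := by
      rw [abs_mul, abs_of_nonneg (sub_nonneg.2 ht1)]
      linarith

theorem isBigO_one_div_of_eventually_mul_abs_le {r : ℕ → ℝ}
    (h : ∀ᶠ n : ℕ in atTop, ((n : ℝ) + 1) * |r (n + 1)| ≤ n * |r n|) :
    r =O[atTop] fun n : ℕ => 1 / ((n : ℝ) + 1) := by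
  obtain ⟨N, hN⟩ := eventually_atTop.1 h
  have hanti : ∀ n ≥ N, n * |r n| ≤ N * |r N| := fun n hn => by
    induction n, hn using Nat.le_induction with
    | base => rfl
    | succ n hn ih => exact_mod_cast (hN n hn).trans ih
  refine .of_bound (2 * (N * |r N|)) ?_
  filter_upwards [eventually_ge_atTop N, eventually_ge_atTop 1] with n hn hn1
  have hn1' : (1 : ℝ) ≤ n := by exact_mod_cast hn1
  rw [Real.norm_eq_abs, Real.norm_of_nonneg (by positivity), mul_one_div,
    le_div_iff₀ (by positivity)]
  nlinarith [hanti n hn, abs_nonneg (r n)]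

theorem isBigO_one_div_of_step {y : ℕ → ℂ} {ν : ℝ} (hν : 2 ≤ ν)
    (hy : ∀ᶠ n in atTop, |(y n).im| ≤ |(y n).re|)
    (hstep : ∀ᶠ n : ℕ in atTop, ‖y (n + 1) - y n + (ν / (n + 1) : ℝ) * conj (y n)‖ ≤
      ν / (n + 1) / 4 * ‖y n‖) :
    y =O[atTop] fun n : ℕ => 1 / ((n : ℝ) + 1) := by
  have hre : (fun n => (y n).re) =O[atTop] fun n : ℕ => 1 / ((n : ℝ) + 1) := by
    refine isBigO_one_div_of_eventually_mul_abs_le ?_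
    filter_upwards [hy, hstep, eventually_ge_atTop ⌈ν⌉₊] with n hyn hstepn hn
    have hνn : ν ≤ n := Nat.ceil_le.1 hn
    have hdecay := abs_re_le_of_step (by positivity)
      ((div_le_one (by positivity)).2 (by linarith)) hstepn hyn
    calc ((n : ℝ) + 1) * |(y (n + 1)).re|
        ≤ (n + 1) * ((1 - ν / (n + 1) / 2) * |(y n).re|) := by gcongr
      _ = (n + 1 - ν / 2) * |(y n).re| := by field_simp
      _ ≤ n * |(y n).re| := by
        gcongr
        linarith
  refine IsBigO.trans (.of_bound 2 ?_) hre
  filter_upwards [hy] with n hn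
  rw [Real.norm_eq_abs]
  linarith [Complex.norm_le_abs_re_add_abs_im (y n)]

theorem exists_ne_zero_forall_abs_le {X : Type*} [NormedAddCommGroup X] [NormedSpace ℝ X]
    (hX : 1 < Module.finrank ℝ X) {f g : ℕ → X →ₗ[ℝ] ℝ}
    (h : ∀ n x, |f n x| < |g n x| → |f (n + 1) x| < |g (n + 1) x|) :
    ∃ x ≠ 0, ∀ n, |g n x| ≤ |f n x| := by
  have := Module.finite_of_finrank_pos (zero_lt_one.trans hX)
  have := FiniteDimensional.proper ℝ X
  let S : ℕ → Set X := fun n => Metric.sphere 0 1 ∩ {x | |g n x| ≤ |f n x|}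
  have hclosed : ∀ n, IsClosed (S n) := fun n => Metric.isClosed_sphere.inter <|
    isClosed_le (g n).continuous_of_finiteDimensional.abs
      (f n).continuous_of_finiteDimensional.abs
  have hanti : ∀ n, S (n + 1) ⊆ S n := fun n x hx =>
    ⟨hx.1, not_lt.1 fun hlt => (h n x hlt).not_ge hx.2⟩
  have hne : ∀ n, (S n).Nonempty := fun n => by
    have hker := LinearMap.ker_ne_bot_of_finrank_lt (f := g n) (by rwa [Module.finrank_self])
    obtain ⟨x, hx : g n x = 0, hx0⟩ := Submodule.exists_mem_ne_zero_of_ne_bot hker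
    refine ⟨‖x‖⁻¹ • x, ?_, ?_⟩
    · rw [mem_sphere_zero_iff_norm, norm_smul, norm_inv, norm_norm,
        inv_mul_cancel₀ (norm_ne_zero_iff.2 hx0)]
    · change |g n (‖x‖⁻¹ • x)| ≤ |f n (‖x‖⁻¹ • x)|
      rw [map_smul, hx, smul_zero, abs_zero]
      exact abs_nonneg _
  obtain ⟨x, hx⟩ := IsCompact.nonempty_iInter_of_sequence_nonempty_isCompact_isClosed S hanti hne
    ((isCompact_sphere 0 1).of_isClosed_subset (hclosed 0) Set.inter_subset_left) hclosed
  rw [Set.mem_iInter] at hx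
  exact ⟨x, ne_zero_of_mem_unit_sphere ⟨x, (hx 0).1⟩, fun n => (hx n).2⟩

end Cone

section Recurrence

variable {X : Type*} [NormedAddCommGroup X] [NormedSpace ℝ X] {ν : ℝ}

theorem exists_ne_zero_isBigO_of_step (hX : 1 < Module.finrank ℝ X) (hν : 2 ≤ ν)
    {Y : ℕ → X →ₗ[ℝ] ℂ}
    (hstep : ∀ᶠ n : ℕ in atTop, ∀ x, ‖Y (n + 1) x - Y n x + (ν / (n + 1) : ℝ) * conj (Y n x)‖ ≤
      ν / (n + 1) / 4 * ‖Y n x‖) :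
    ∃ x ≠ 0, (fun n => Y n x) =O[atTop] fun n : ℕ => 1 / ((n : ℝ) + 1) := by
  obtain ⟨N, hN⟩ := eventually_atTop.1 (hstep.and (eventually_ge_atTop ⌈ν⌉₊))
  obtain ⟨x, hx0, hx⟩ := exists_ne_zero_forall_abs_le hX (f := fun n => Complex.reLm ∘ₗ Y (n + N))
    (g := fun n => Complex.imLm ∘ₗ Y (n + N)) fun n x hlt => by
      have hνn : ν ≤ (n + N : ℕ) := Nat.ceil_le.1 (hN (n + N) (Nat.le_add_left N n)).2
      rw [Nat.add_right_comm]
      exact abs_re_lt_abs_im_of_step (by positivity)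
        ((div_le_one (by positivity)).2 (by linarith))
        ((hN (n + N) (Nat.le_add_left N n)).1 x) hlt
  refine ⟨x, hx0, isBigO_one_div_of_step hν ?_ (hstep.mono fun n hn => hn x)⟩
  filter_upwards [eventually_ge_atTop N] with n hn
  obtain ⟨k, rfl⟩ := Nat.exists_eq_add_of_le' hn
  exact hx k

theorem one_div_sub_one_div_succ_le_sq (n : ℕ) :
    |1 / ((n : ℝ) + 1) - 1 / ((n + 1 : ℕ) + 1)| ≤ (1 / ((n : ℝ) + 1)) ^ 2 := by
  rw [abs_of_nonneg (sub_nonneg.2 (by gcongr; exact n.le_succ)), div_sub_div _ _ (by positivity)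
    (by positivity), div_pow, div_le_div_iff₀ (by positivity) (by positivity)]
  push_cast
  nlinarith [n.cast_nonneg (α := ℝ)]

theorem exists_averaged_coordinates (hν : 2 ≤ ν) {A : ℕ → X →ₗ[ℝ] ℂ} {K : ℕ → ℂ →L[ℝ] ℂ}
    (hK : HasBoundedPartialSums fun n => K n + ν • (Complex.conjCLE : ℂ →L[ℝ] ℂ))
    (hA : ∀ n x, A (n + 1) x - A n x = (1 / ((n : ℝ) + 1)) • K n (A n x)) :
    ∃ Y : ℕ → X →ₗ[ℝ] ℂ, ∀ᶠ n : ℕ in atTop, ∀ x, ‖A n x‖ ≤ 2 * ‖Y n x‖ ∧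
      ‖Y (n + 1) x - Y n x + (ν / (n + 1) : ℝ) * conj (Y n x)‖ ≤ ν / (n + 1) / 4 * ‖Y n x‖ := by
  obtain ⟨B, hB⟩ := hK
  let Q : ℂ →L[ℝ] ℂ := -(ν • (Complex.conjCLE : ℂ →L[ℝ] ℂ))
  let M : ℕ → ℂ →L[ℝ] ℂ := fun n => ∑ i ∈ Finset.range n, (K i - Q)
  have hM : ∀ n, ‖M n‖ ≤ B := fun n => by simpa only [M, Q, sub_neg_eq_add] using hB n
  have hK : ∀ n, K n = M (n + 1) - M n + Q := fun n => by
    simp only [M, Finset.sum_range_succ, add_sub_cancel_left, sub_add_cancel]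
  refine ⟨fun n => A n - (1 / ((n : ℝ) + 1)) • (M n).toLinearMap ∘ₗ A n, ?_⟩
  filter_upwards [eventually_ge_atTop ⌈max (2 * B) (4 * (B * (1 + 4 * B + 3 * ‖Q‖)))⌉₊] with n hn x
  obtain ⟨hBn, hQn⟩ := max_le_iff.1 (Nat.ceil_le.1 hn)
  set τ := 1 / ((n : ℝ) + 1) with hτ
  have hτ0 : 0 ≤ τ := by positivity
  have hτ1 : τ ≤ 1 := (div_le_one (by positivity)).2 (by linarith [n.cast_nonneg (α := ℝ)])
  have hmul {b : ℝ} (hb : b ≤ n) : b * τ ≤ 1 := by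
    rw [mul_one_div, div_le_one (by positivity)]
    linarith
  have hconj (y : ℂ) : τ • Q y = -((ν / (n + 1) : ℝ) * conj y) := by
    rw [div_eq_mul_one_div ν, ← hτ, mul_comm ν, ← Complex.real_smul, mul_smul, ← smul_neg]
    rfl
  refine ⟨norm_le_two_mul_norm_sub_smul hτ0 (hM n) (hmul hBn), ?_⟩
  calc _ = ‖(A (n + 1) x - (1 / (((n + 1 : ℕ) : ℝ) + 1)) • M (n + 1) (A (n + 1) x)) -
          (A n x - τ • M n (A n x)) - τ • Q (A n x - τ • M n (A n x))‖ := by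
        rw [hconj, sub_neg_eq_add]
        rfl
    _ ≤ τ / 2 * ‖A n x - τ • M n (A n x)‖ :=
        norm_averaging_step_le_half_mul hτ0 hτ1 (one_div_sub_one_div_succ_le_sq n) (hM n)
          (hM (n + 1)) (hmul hBn) (hmul hQn) ((hA n x).trans (by rw [hK]))
    _ ≤ ν / (n + 1) / 4 * ‖A n x - τ • M n (A n x)‖ := by
        refine mul_le_mul_of_nonneg_right ?_ (norm_nonneg _)
        rw [div_eq_mul_one_div ν, ← hτ]
        nlinarith

theorem exists_ne_zero_isBigO_of_recurrence (hX : 1 < Module.finrank ℝ X) (hν : 2 ≤ ν)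
    {A : ℕ → X →ₗ[ℝ] ℂ} {K : ℕ → ℂ →L[ℝ] ℂ}
    (hK : HasBoundedPartialSums fun n => K n + ν • (Complex.conjCLE : ℂ →L[ℝ] ℂ))
    (hA : ∀ n x, A (n + 1) x - A n x = (1 / ((n : ℝ) + 1)) • K n (A n x)) :
    ∃ x ≠ 0, (fun n => A n x) =O[atTop] fun n : ℕ => 1 / ((n : ℝ) + 1) := by
  obtain ⟨Y, hY⟩ := exists_averaged_coordinates hν hK hA
  obtain ⟨x, hx0, hx⟩ := exists_ne_zero_isBigO_of_step hX hν (hY.mono fun n hn x => (hn x).2)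
  exact ⟨x, hx0, (IsBigO.of_bound 2 (hY.mono fun n hn => (hn x).1)).trans hx⟩

end Recurrence

section TransferProduct

/-- The propagator of the eigenvalue equation at energy `e` for the potential whose values at
`1, 2, …` are `q 0, q 1, …`: it maps `(u 1, u 0)` to `(u (n + 1), u n)`. -/
def transferProduct (e : ℝ) (q : ℕ → ℝ) : ℕ → SL(2, ℝ)
  | 0 => 1
  | n + 1 => transferMatrix e (q n) * transferProduct e q n

theorem transferProduct_succ' (e : ℝ) (q : ℕ → ℝ) (n : ℕ) :
    transferProduct e q (n + 1) =
      transferProduct e (fun k => q (k + 1)) n * transferMatrix e (q 0) := by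
  induction n with
  | zero => simp only [transferProduct, one_mul, mul_one]
  | succ n ih =>
    rw [transferProduct, ih, ← mul_assoc]
    rfl

theorem transferProduct_succ_smul (e : ℝ) (q : ℕ → ℝ) (x : Fin 2 → ℝ) (n : ℕ) :
    transferProduct e q (n + 1) • x = ![(e - q n) * (transferProduct e q n • x) 0 -
      (transferProduct e q n • x) 1, (transferProduct e q n • x) 0] := by
  rw [transferProduct, mul_smul, transferMatrix_smul]

theorem transferProduct_smul_eigen_equation (e : ℝ) (q : ℕ → ℝ) (x : Fin 2 → ℝ) (n : ℕ) :
    (transferProduct e q (n + 2) • x) 1 + (transferProduct e q n • x) 1 +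
      q n * (transferProduct e q (n + 1) • x) 1 = e * (transferProduct e q (n + 1) • x) 1 := by
  simp only [transferProduct_succ_smul, Matrix.cons_val_zero, Matrix.cons_val_one]
  ring

theorem transferProduct_zero_smul_apply_one (e : ℝ) (q : ℕ → ℝ) (x : Fin 2 → ℝ) :
    (transferProduct e q 0 • x) 1 = x 1 := by
  rw [transferProduct, one_smul]

theorem transferProduct_one_smul_apply_one (e : ℝ) (q : ℕ → ℝ) (x : Fin 2 → ℝ) :
    (transferProduct e q 1 • x) 1 = x 0 := by
  rw [transferProduct, transferProduct, mul_one, transferMatrix_smul]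
  rfl

theorem transferProduct_smul_apply_one_ne_zero (e : ℝ) (q : ℕ → ℝ) {x : Fin 2 → ℝ} (hx : x ≠ 0) :
    (fun n => (transferProduct e q n • x) 1) ≠ 0 := by
  intro h
  have h0 : x 0 = 0 := transferProduct_one_smul_apply_one e q x ▸ congrFun h 1
  have h1 : x 1 = 0 := transferProduct_zero_smul_apply_one e q x ▸ congrFun h 0
  exact hx (funext fun i => by fin_cases i <;> assumption)

end TransferProduct

section Amplitude

variable {ζ : ℂ}

theorem exists_norm_eq_one_of_mem_Ioo {e : ℝ} (he : e ∈ Set.Ioo (-2 : ℝ) 2) :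
    ∃ ζ : ℂ, ‖ζ‖ = 1 ∧ ζ.im < 0 ∧ 2 * ζ.re = e := by
  have hpos : 0 < 1 - (e / 2) ^ 2 := by nlinarith [he.1, he.2]
  refine ⟨⟨e / 2, -√(1 - (e / 2) ^ 2)⟩, ?_, neg_neg_of_pos (Real.sqrt_pos.2 hpos),
    mul_div_cancel₀ e two_ne_zero⟩
  rw [← sq_eq_sq₀ (norm_nonneg _) zero_le_one, ← Complex.normSq_eq_norm_sq, Complex.normSq_mk,
    neg_mul_neg, Real.mul_self_sqrt hpos.le]
  ring

/-- The coefficient of one of the two plane waves in the solution of the free equation with energy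
`2 * ζ.re` and data `x = (u (n + 1), u n)`. The factor `1 - I` is the phase for which resonances
of the potential drive the amplitude along real multiples of its conjugate. -/
def amplitude (ζ : ℂ) : (Fin 2 → ℝ) →ₗ[ℝ] ℂ where
  toFun x := (1 - Complex.I) * (x 0 - ζ * x 1)
  map_add' x y := by
    simp only [Pi.add_apply, Complex.ofReal_add]
    ring
  map_smul' c x := by
    simp only [Pi.smul_apply, smul_eq_mul, Complex.ofReal_mul, Complex.real_smul, RingHom.id_apply]
    ring

theorem amplitude_apply (ζ : ℂ) (x : Fin 2 → ℝ) :
    amplitude ζ x = (1 - Complex.I) * (x 0 - ζ * x 1) := rfl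

theorem mul_conj_eq_one (hζ : ‖ζ‖ = 1) : ζ * conj ζ = 1 := by
  rw [Complex.mul_conj, Complex.normSq_eq_norm_sq, hζ, one_pow, Complex.ofReal_one]

theorem abs_im_mul_norm_le_norm_amplitude (hζ : ‖ζ‖ = 1) (x : Fin 2 → ℝ) :
    |ζ.im| * ‖x‖ ≤ ‖amplitude ζ x‖ := by
  have hone : 1 ≤ ‖1 - Complex.I‖ := by simpa using Complex.abs_re_le_norm (1 - Complex.I)
  have hle : ‖(x 0 - ζ * x 1 : ℂ)‖ ≤ ‖amplitude ζ x‖ := by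
    rw [amplitude_apply, norm_mul]
    exact le_mul_of_one_le_left (norm_nonneg _) hone
  have h0 : |ζ.im| * |x 0| ≤ ‖(x 0 - ζ * x 1 : ℂ)‖ :=
    calc |ζ.im| * |x 0| = |(conj ζ * (x 0 - ζ * x 1)).im| := by
          rw [mul_sub, ← mul_assoc, mul_comm (conj ζ) ζ, mul_conj_eq_one hζ]
          simp [abs_mul]
      _ ≤ ‖conj ζ * (x 0 - ζ * x 1)‖ := Complex.abs_im_le_norm _
      _ = ‖(x 0 - ζ * x 1 : ℂ)‖ := by rw [norm_mul, Complex.norm_conj, hζ, one_mul]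
  have h1 : |ζ.im| * |x 1| ≤ ‖(x 0 - ζ * x 1 : ℂ)‖ := by
    simpa [abs_mul] using Complex.abs_im_le_norm (x 0 - ζ * x 1)
  rw [← abs_abs, ← Real.norm_eq_abs, ← norm_smul]
  refine le_trans ((pi_norm_le_iff_of_nonneg (norm_nonneg _)).2 fun i => ?_) hle
  fin_cases i
  · simpa using h0
  · simpa using h1

theorem mul_amplitude_transferMatrix_smul (hζ : ‖ζ‖ = 1) (him : ζ.im ≠ 0) (v : ℝ)
    (x : Fin 2 → ℝ) :
    ζ * amplitude ζ (transferMatrix (2 * ζ.re) v • x) = amplitude ζ x +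
      (v / (-2 * ζ.im) : ℝ) * (Complex.I * amplitude ζ x - ζ ^ 2 * conj (amplitude ζ x)) := by
  have hc := mul_conj_eq_one hζ
  have hre : ((2 * ζ.re : ℝ) : ℂ) = ζ + conj ζ := (Complex.add_conj ζ).symm
  have him' : ((-2 * ζ.im : ℝ) : ℂ) = Complex.I * (ζ - conj ζ) := by
    rw [Complex.sub_conj]
    push_cast
    linear_combination (-2 * (ζ.im : ℂ)) * Complex.I_sq
  have him0 : Complex.I * (ζ - conj ζ) ≠ 0 := by
    rw [← him', Complex.ofReal_ne_zero]
    exact mul_ne_zero (neg_ne_zero.2 two_ne_zero) him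
  simp only [amplitude_apply, transferMatrix_smul, Matrix.cons_val_zero, Matrix.cons_val_one,
    Complex.ofReal_sub, Complex.ofReal_mul (2 * ζ.re - v), Complex.ofReal_div, hre, him', map_sub,
    map_mul, map_one, Complex.conj_I, Complex.conj_ofReal, sub_neg_eq_add]
  rw [div_mul_eq_mul_div, ← sub_eq_iff_eq_add', eq_div_iff him0]
  linear_combination
    (1 - Complex.I) * Complex.I * (x 0 * (ζ - conj ζ) + v * x 0 - v * ζ * x 1) * hc +
      v * ζ ^ 2 * (x 0 - conj ζ * x 1) * Complex.I_sq

theorem pow_succ_mul_amplitude_transferMatrix_smul (hζ : ‖ζ‖ = 1) (him : ζ.im ≠ 0) (n : ℕ) (v : ℝ)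
    (x : Fin 2 → ℝ) :
    ζ ^ (n + 1) * amplitude ζ (transferMatrix (2 * ζ.re) v • x) = ζ ^ n * amplitude ζ x +
      (v / (-2 * ζ.im) : ℝ) * (Complex.I * (ζ ^ n * amplitude ζ x) -
        (ζ ^ 2) ^ (n + 1) * conj (ζ ^ n * amplitude ζ x)) := by
  have hc : ζ ^ n * conj (ζ ^ n) = 1 := mul_conj_eq_one (by rw [norm_pow, hζ, one_pow])
  rw [pow_succ, mul_assoc, mul_amplitude_transferMatrix_smul hζ him, map_mul]
  linear_combination (v / (-2 * ζ.im) : ℝ) * ζ ^ (n + 2) * conj (amplitude ζ x) * hc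

end Amplitude

section WignerVonNeumann

/-- The mean over `n` of `(∑ i, Re (a i ^ n)) * z ^ n` for unimodular `a i` and `z`. -/
noncomputable def resonance {ι : Type*} [Fintype ι] (a : ι → ℂ) (z : ℂ) : ℝ :=
  ∑ i, ((if a i * z = 1 then 1 else 0) + if conj (a i) * z = 1 then 1 else 0) / 2

theorem half_le_resonance {ι : Type*} [Fintype ι] {a : ι → ℂ} (ha : ∀ i, ‖a i‖ = 1) (j : ι) :
    1 / 2 ≤ resonance a (a j) := by
  have hj : conj (a j) * a j = 1 := mul_comm (a j) _ ▸ mul_conj_eq_one (ha j)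
  refine le_trans ?_ (Finset.single_le_sum (fun i _ => by positivity) (Finset.mem_univ j))
  rw [if_pos hj]
  gcongr
  exact le_add_of_nonneg_left (by positivity)

theorem resonance_one {ι : Type*} [Fintype ι] {a : ι → ℂ} (ha : ∀ i, a i ≠ 1) :
    resonance a 1 = 0 := by
  simp [resonance, ha, map_eq_one_iff (starRingEnd ℂ) (starRingEnd ℂ).injective]

theorem hasBoundedPartialSums_sum_re_pow_mul_sub_resonance {ι : Type*} [Fintype ι] {a : ι → ℂ}
    (ha : ∀ i, ‖a i‖ = 1) {z : ℂ} (hz : ‖z‖ = 1) :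
    HasBoundedPartialSums fun n =>
      ((∑ i, (a i ^ (n + 1)).re : ℝ) : ℂ) * z ^ (n + 1) - resonance a z := by
  have hsummand : ∀ i, HasBoundedPartialSums fun n => ((a i ^ (n + 1)).re : ℂ) * z ^ (n + 1) -
      ((if a i * z = 1 then 1 else 0) + if conj (a i) * z = 1 then 1 else 0) / 2 := fun i => by
    have haz : ‖a i * z‖ = 1 := by rw [norm_mul, ha, hz, one_mul]
    have hcaz : ‖conj (a i) * z‖ = 1 := by rw [norm_mul, Complex.norm_conj, ha, hz, one_mul]
    convert ((hasBoundedPartialSums_pow_succ_sub haz).add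
      (hasBoundedPartialSums_pow_succ_sub hcaz)).map (ContinuousLinearMap.mul ℂ ℂ (1 / 2)) using 2
    rw [Complex.re_eq_add_conj, map_pow, ContinuousLinearMap.mul_apply', Pi.add_apply, mul_pow,
      mul_pow]
    ring
  convert HasBoundedPartialSums.sum (s := Finset.univ) fun i _ => hsummand i using 2
  simp only [resonance, Complex.ofReal_sum, Complex.ofReal_div, Complex.ofReal_add, apply_ite,
    Complex.ofReal_one, Complex.ofReal_zero, Complex.ofReal_ofNat, Finset.sum_mul,
    Finset.sum_sub_distrib]

theorem exists_ne_zero_transferProduct_smul_isBigO {ζ : ℂ} (hζ : ‖ζ‖ = 1) (him : ζ.im < 0)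
    {W : ℕ → ℝ} (hW : HasBoundedPartialSums W) {w : ℝ} (hw : 1 / 2 ≤ w)
    (hWζ : HasBoundedPartialSums fun n => (W n : ℂ) * (ζ ^ 2) ^ (n + 1) - w) :
    ∃ x : Fin 2 → ℝ, x ≠ 0 ∧
      (fun n => transferProduct (2 * ζ.re) (fun k => 8 * W k / (k + 1)) n • x) =O[atTop]
        fun n : ℕ => 1 / ((n : ℝ) + 1) := by
  set q : ℕ → ℝ := fun k => 8 * W k / (k + 1) with hq
  set c : ℝ := 4 / -ζ.im with hc
  have hν : 2 ≤ c * w := by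
    have him1 : -ζ.im ≤ 1 := hζ ▸ (neg_le_abs _).trans (Complex.abs_im_le_norm ζ)
    rw [hc, div_mul_eq_mul_div, le_div_iff₀ (neg_pos.2 him)]
    linarith
  let A : ℕ → (Fin 2 → ℝ) →ₗ[ℝ] ℂ := fun n =>
    ζ ^ n • amplitude ζ ∘ₗ DistribSMul.toLinearMap ℝ (Fin 2 → ℝ) (transferProduct (2 * ζ.re) q n)
  let K : ℕ → ℂ →L[ℝ] ℂ := fun n => (c * W n) • (Complex.I • ContinuousLinearMap.id ℝ ℂ -
    (ζ ^ 2) ^ (n + 1) • (Complex.conjCLE : ℂ →L[ℝ] ℂ))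
  have hK : HasBoundedPartialSums fun n => K n + (c * w) • (Complex.conjCLE : ℂ →L[ℝ] ℂ) := by
    convert (hW.map (ContinuousLinearMap.toSpanSingleton ℝ
      (c • Complex.I • ContinuousLinearMap.id ℝ ℂ))).add (hWζ.map
      (ContinuousLinearMap.toSpanSingleton ℂ (-c • (Complex.conjCLE : ℂ →L[ℝ] ℂ)))) using 1
    ext1 n
    simp only [K, Pi.add_apply, ContinuousLinearMap.toSpanSingleton_apply]
    module
  have hA : ∀ n x, A (n + 1) x - A n x = (1 / ((n : ℝ) + 1)) • K n (A n x) := by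
    intro n x
    have hcoeff : q n / (-2 * ζ.im) = 1 / ((n : ℝ) + 1) * (c * W n) := by
      simp only [hq, hc]
      field_simp
      ring
    change ζ ^ (n + 1) * amplitude ζ (transferProduct (2 * ζ.re) q (n + 1) • x) -
      ζ ^ n * amplitude ζ (transferProduct (2 * ζ.re) q n • x) = _
    rw [transferProduct, mul_smul, pow_succ_mul_amplitude_transferMatrix_smul hζ him.ne,
      add_sub_cancel_left, hcoeff, Complex.ofReal_mul, mul_assoc]
    rfl
  obtain ⟨x, hx0, hx⟩ := exists_ne_zero_isBigO_of_recurrence (by simp) hν hK hA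
  refine ⟨x, hx0, (IsBigO.of_bound |ζ.im|⁻¹ (.of_forall fun n => ?_)).trans hx⟩
  rw [inv_mul_eq_div, le_div_iff₀' (abs_pos.2 him.ne)]
  refine (abs_im_mul_norm_le_norm_amplitude hζ _).trans_eq ?_
  simp [A, hζ]

/-- A common potential of size `O(1 / n)` exists for which, at every energy `E j`, the solution with
data `x j = (u 1, u 0)` is of size `O(1 / n)`. -/
def HasDecayingSolutions {ι : Type*} (E : ι → ℝ) (x : ι → Fin 2 → ℝ) : Prop :=
  ∃ q : ℕ → ℝ, (q =O[atTop] fun n : ℕ => 1 / ((n : ℝ) + 1)) ∧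
    ∀ j, (fun n => transferProduct (E j) q n • x j) =O[atTop] fun n : ℕ => 1 / ((n : ℝ) + 1)

variable {ι : Type*} {E : ι → ℝ} {x : ι → Fin 2 → ℝ}

theorem exists_hasDecayingSolutions [Finite ι] (hE : ∀ j, E j ∈ Set.Ioo (-2 : ℝ) 2) :
    ∃ x : ι → Fin 2 → ℝ, (∀ j, x j ≠ 0) ∧ HasDecayingSolutions E x := by
  have := Fintype.ofFinite ι
  choose ζ hζ him hre using fun j => exists_norm_eq_one_of_mem_Ioo (hE j)
  have hζ2 : ∀ i, ‖ζ i ^ 2‖ = 1 := fun i => by rw [norm_pow, hζ, one_pow]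
  have hζ2_ne : ∀ i, ζ i ^ 2 ≠ 1 := fun i h => by
    rcases mul_self_eq_one_iff.1 (sq (ζ i) ▸ h) with h | h <;> simpa [h] using him i
  let W : ℕ → ℝ := fun n => ∑ i, ((ζ i ^ 2) ^ (n + 1)).re
  have hW : HasBoundedPartialSums W := by
    have h := hasBoundedPartialSums_sum_re_pow_mul_sub_resonance hζ2 (z := 1) norm_one
    rw [resonance_one hζ2_ne] at h
    simpa using h.map Complex.reCLM
  have hWζ : ∀ j, HasBoundedPartialSums fun n =>
      (W n : ℂ) * (ζ j ^ 2) ^ (n + 1) - resonance (fun i => ζ i ^ 2) (ζ j ^ 2) := fun j =>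
    hasBoundedPartialSums_sum_re_pow_mul_sub_resonance hζ2 (hζ2 j)
  choose x hx0 hx using fun j => exists_ne_zero_transferProduct_smul_isBigO (hζ j) (him j) hW
    (half_le_resonance hζ2 j) (hWζ j)
  refine ⟨x, hx0, _, .of_bound (8 * Fintype.card ι) (.of_forall fun n => ?_),
    fun j => hre j ▸ hx j⟩
  have hWn : |W n| ≤ Fintype.card ι := by
    calc |W n| ≤ ∑ _ : ι, (1 : ℝ) := Finset.abs_sum_le_sum_abs _ _ |>.trans <|
          Finset.sum_le_sum fun i _ =>
            (Complex.abs_re_le_norm _).trans_eq (by rw [norm_pow, hζ2, one_pow])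
      _ = Fintype.card ι := by rw [Finset.sum_const, Finset.card_univ, nsmul_one]
  rw [norm_div, norm_div, norm_one, mul_one_div, norm_mul, Real.norm_eq_abs (W n), Real.norm_ofNat]
  gcongr

theorem isBigO_one_div_of_succ {X : Type*} [SeminormedAddCommGroup X] {f : ℕ → X}
    (hf : (fun n => f (n + 1)) =O[atTop] fun n : ℕ => 1 / ((n : ℝ) + 1)) :
    f =O[atTop] fun n : ℕ => 1 / ((n : ℝ) + 1) := by
  rw [← map_add_atTop_eq_nat 1, isBigO_map]
  refine hf.trans (.of_bound 2 (.of_forall fun n => ?_))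
  simp only [Function.comp_apply]
  rw [Real.norm_of_nonneg (by positivity), Real.norm_of_nonneg (by positivity), mul_one_div,
    div_le_div_iff₀ (by positivity) (by positivity)]
  push_cast
  linarith [n.cast_nonneg (α := ℝ)]

theorem HasDecayingSolutions.of_transferMatrix_smul {v : ℝ}
    (h : HasDecayingSolutions E ((fun j => transferMatrix (E j) v) • x)) :
    HasDecayingSolutions E x := by
  obtain ⟨q, hq, hsol⟩ := h
  refine ⟨fun | 0 => v | n + 1 => q n, isBigO_one_div_of_succ hq, fun j => ?_⟩
  refine isBigO_one_div_of_succ ((hsol j).congr_left fun n => ?_)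
  rw [transferProduct_succ', mul_smul, Pi.smul_apply']

theorem HasDecayingSolutions.of_mem_orbit {y : ι → Fin 2 → ℝ} (hy : HasDecayingSolutions E y)
    (hxy : y ∈ MulAction.orbit (transferMonoid E) x) : HasDecayingSolutions E x := by
  obtain ⟨⟨g, hg⟩, rfl⟩ := hxy
  change HasDecayingSolutions E (g • x) at hy
  induction hg using Submonoid.closure_induction generalizing x with
  | mem g hg =>
    obtain ⟨v, rfl⟩ := hg
    exact hy.of_transferMatrix_smul
  | one => rwa [one_smul] at hy
  | mul a b _ _ iha ihb =>
    rw [mul_smul] at hy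
    exact ihb (iha hy)

theorem hasDecayingSolutions_of_ne_zero [Finite ι] (hE : ∀ j, E j ∈ Set.Ioo (-2 : ℝ) 2)
    (hEinj : Function.Injective E) (hx : ∀ j, x j ≠ 0) : HasDecayingSolutions E x := by
  obtain ⟨y, hy, h⟩ := exists_hasDecayingSolutions hE
  exact h.of_mem_orbit (mem_orbit_transferMonoid hE hEinj hx hy)

end WignerVonNeumann

theorem summable_sq_of_isBigO_one_div {u : ℕ → ℝ}
    (hu : u =O[atTop] fun n : ℕ => 1 / ((n : ℝ) + 1)) : Summable fun n => u n ^ 2 := by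
  refine summable_of_isBigO_nat ?_ (hu.pow 2)
  simp only [one_div_pow]
  exact_mod_cast (summable_nat_add_iff 1).2 (Real.summable_one_div_nat_pow.2 one_lt_two)

theorem exists_pos_forall_abs_le_div {q : ℕ → ℝ}
    (hq : q =O[atTop] fun n : ℕ => 1 / ((n : ℝ) + 1)) :
    ∃ C, 0 < C ∧ ∀ n : ℕ, |q n| ≤ C / (1 + n) := by
  obtain ⟨C, hC, h⟩ := bound_of_isBigO_nat_atTop hq
  refine ⟨C, hC, fun n => ?_⟩
  have := h (x := n) (by positivity)
  rwa [Real.norm_eq_abs, Real.norm_of_nonneg (by positivity), mul_one_div, add_comm] at this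

/-- Theorem 1: for any finite set of distinct energies in `(-2,2)` and any boundary
phases, there is a potential `V` with `|V(n)| ≤ C/(1+n)` such that each `E j` is an
eigenvalue of `Δ + V` with the prescribed boundary condition. -/
theorem finitely_many_embedded_eigenvalues (m : ℕ) (E θ : Fin m → ℝ)
    (hE : ∀ j, E j ∈ Set.Ioo (-2 : ℝ) 2)
    (hEinj : Function.Injective E)
    (hθ : ∀ j, θ j ∈ Set.Ico (0 : ℝ) Real.pi) :
    ∃ (V : ℕ → ℝ) (C : ℝ), 0 < C ∧ (∀ n : ℕ, |V n| ≤ C / (1 + (n : ℝ))) ∧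
      ∀ j : Fin m, ∃ u : ℕ → ℝ, u ≠ 0 ∧ Summable (fun n => (u n) ^ 2) ∧
        (∀ n : ℕ, 1 ≤ n → u (n + 1) + u (n - 1) + V n * u n = E j * u n) ∧
        u 1 * Real.cos (θ j) = u 0 * Real.sin (θ j) := by
  let x : Fin m → Fin 2 → ℝ := fun j => ![Real.sin (θ j), Real.cos (θ j)]
  have hx : ∀ j, x j ≠ 0 := fun j h => by
    have h0 : Real.sin (θ j) = 0 := congrFun h 0
    have h1 : Real.cos (θ j) = 0 := congrFun h 1
    simpa [h0, h1] using Real.sin_sq_add_cos_sq (θ j)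
  obtain ⟨q, hq, hdecay⟩ := hasDecayingSolutions_of_ne_zero hE hEinj hx
  let V : ℕ → ℝ := fun | 0 => 0 | n + 1 => q n
  obtain ⟨C, hC, hV⟩ := exists_pos_forall_abs_le_div (q := V) (isBigO_one_div_of_succ hq)
  refine ⟨V, C, hC, hV, fun j => ⟨fun n => (transferProduct (E j) q n • x j) 1, ?_, ?_, ?_, ?_⟩⟩
  · exact transferProduct_smul_apply_one_ne_zero (E j) q (hx j)
  · exact summable_sq_of_isBigO_one_div (isBigO_pi.1 (hdecay j) 1)
  · intro n hn
    obtain ⟨n, rfl⟩ := Nat.exists_eq_add_of_le' hn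
    exact transferProduct_smul_eigen_equation (E j) q (x j) n
  · simp only [transferProduct_zero_smul_apply_one, transferProduct_one_smul_apply_one]
    exact mul_comm _ _
end

section
/- Let {E_j}_{j=1}^∞ be a countable set of distinct points in (-2,2), let {θ_j}_{j=1}^∞ ⊂ [0,π), and let h : ℕ → (0,∞) be any non-decreasing function with h(n) → ∞ as n → ∞. Then there exists a potential V : ℕ → ℝ with |V(n)| ≤ h(n)/(1+n) for all n, such that for every j ∈ ℕ the eigen-equation u(n+1) + u(n-1) + V(n)u(n) = E_j·u(n) (n ≥ 1) has a nonzero solution u ∈ ℓ²(ℕ) satisfying the boundary condition u(1)·cos(θ_j) = u(0)·sin(θ_j). -/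
/-!
At an energy `e = 2 cos k` a solution of the eigenvalue equation is described by a complex Prüfer
amplitude `z e`, constant wherever the potential vanishes. A weak potential on a window of length
`L` changes `z e` to first order through its sum and its moment at the node `exp (-2 i k)` only,
so for finitely many energies these moments can be prescribed by polynomial interpolation. A real
potential has conjugate moments at `e` and `-e`, and such a pair is treated jointly: the feedback
law prescribes the moments so that `p = z e * z (-e)` follows `p' = I * (p - p.im)`, a linear flow
with eigenvalues the primitive cube roots of unity, hence contracting, while `‖z e / z (-e)‖` is
constant to first order. With mean strength `16 / (n + 1)` the amplitudes decay like `1 / n`, so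
that the solutions are square summable. The potential has size `C / (n + 1)` with `C` depending on
the energies under control; since `h → ∞`, windows can be concatenated while the finite set of
controlled energies slowly exhausts all of them.
-/

open Filter Topology Finset Complex ComplexConjugate

namespace EmbeddedEigenvalues

noncomputable section

section Asymptotics

lemma exists_tendsto_atTop_forall {P : ℕ → ℕ → Prop} (h₀ : ∀ n, P 0 n)
    (h : ∀ N, ∀ᶠ n in atTop, P N n) :
    ∃ σ : ℕ → ℕ, Tendsto σ atTop atTop ∧ ∀ n, P (σ n) n := by
  classical
  refine ⟨fun n ↦ Nat.findGreatest (P · n) n, tendsto_atTop.2 fun N ↦ ?_, fun n ↦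
    Nat.findGreatest_spec (P := (P · n)) n.zero_le (h₀ n)⟩
  filter_upwards [h N, eventually_ge_atTop N] with n hP hn using Nat.le_findGreatest hn hP

lemma exists_forall_window {α : Type*} {P : (ℕ → α) → ℕ → ℕ → Prop} (V₀ : ℕ → α)
    (hlt : ∀ V n n', P V n n' → n < n')
    (hlocal : ∀ ⦃V W : ℕ → α⦄ ⦃n n'⦄, (∀ i ≤ n', V i = W i) → P V n n' → P W n n')
    (hextend : ∀ (V : ℕ → α) n, ∃ (W : ℕ → α) (n' : ℕ), (∀ i ≤ n, W i = V i) ∧ P W n n') :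
    ∃ (V : ℕ → α) (t : ℕ → ℕ), StrictMono t ∧ t 0 = 0 ∧ V 0 = V₀ 0 ∧
      ∀ m, P V (t m) (t (m + 1)) := by
  choose W next hagree hP using hextend
  let state : ℕ → (ℕ → α) × ℕ := Nat.rec (V₀, 0) fun _ s ↦ (W s.1 s.2, next s.1 s.2)
  let U : ℕ → ℕ → α := fun m ↦ (state m).1
  let t : ℕ → ℕ := fun m ↦ (state m).2
  have ht : StrictMono t := strictMono_nat_of_lt_succ fun m ↦
    hlt _ _ _ (hP (U m) (t m))
  have hU : ∀ m k, m ≤ k → ∀ i ≤ t m, U k i = U m i := by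
    intro m k hmk
    induction k, hmk using Nat.le_induction with
    | base => exact fun _ _ ↦ rfl
    | succ k hmk ih =>
      exact fun i hi ↦ (hagree (U k) (t k) i (hi.trans (ht.monotone hmk))).trans (ih i hi)
  have hdiag : ∀ m, ∀ i ≤ t m, U m i = U i i := fun m i hi ↦
    (le_total i m).elim (fun h ↦ hU i m h i (ht.id_le i)) fun h ↦ (hU m i h i hi).symm
  exact ⟨fun i ↦ U i i, t, ht, rfl, rfl, fun m ↦ hlocal (hdiag (m + 1)) (hP (U m) (t m))⟩

end Asymptotics

section Perturbation

variable {𝕜 E : Type*} [Semiring 𝕜] [SeminormedAddCommGroup E] [Module 𝕜 E]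
  {z : ℕ → E} {B : ℕ → E →ₗ[𝕜] E} {x : ℝ} {L : ℕ}

lemma norm_le_two_mul_of_succ_eq_add (hx₀ : 0 ≤ x) (hx : 2 * L * x ≤ 1)
    (hB : ∀ m y, ‖B m y‖ ≤ x * ‖y‖) (hz : ∀ m < L, z (m + 1) = z m + B m (z m)) {m : ℕ}
    (hm : m ≤ L) : ‖z m‖ ≤ 2 * ‖z 0‖ := by
  have hmx : ∀ m ≤ L, 2 * m * x ≤ 1 := fun m hm ↦ hx.trans' (by gcongr)
  have hgrowth : ∀ m ≤ L, ‖z m‖ ≤ (1 + 2 * m * x) * ‖z 0‖ := by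
    intro m hm
    induction m with
    | zero => simp
    | succ m ih =>
      have hfactor : (1 + x) * (1 + 2 * m * x) ≤ 1 + 2 * ↑(m + 1) * x := by
        push_cast
        nlinarith [hmx m (by lia)]
      calc ‖z (m + 1)‖ ≤ ‖z m‖ + x * ‖z m‖ := by
            rw [hz m hm]; exact norm_add_le_of_le le_rfl (hB m _)
        _ = (1 + x) * ‖z m‖ := by ring
        _ ≤ (1 + x) * ((1 + 2 * m * x) * ‖z 0‖) := by gcongr; exact ih (by lia)
        _ ≤ (1 + 2 * ↑(m + 1) * x) * ‖z 0‖ := by rw [← mul_assoc]; gcongr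
  exact (hgrowth m hm).trans (by gcongr; linarith [hmx m hm])

lemma norm_sub_sub_sum_le_of_succ_eq_add (hx₀ : 0 ≤ x) (hx : 2 * L * x ≤ 1)
    (hB : ∀ m y, ‖B m y‖ ≤ x * ‖y‖) (hz : ∀ m < L, z (m + 1) = z m + B m (z m)) :
    ‖z L - z 0 - ∑ m ∈ range L, B m (z 0)‖ ≤ 2 * (L * x) ^ 2 * ‖z 0‖ := by
  have htelescope : ∀ m ≤ L, z m - z 0 = ∑ i ∈ range m, B i (z i) := by
    intro m hm
    rw [← sum_range_sub]
    exact sum_congr rfl fun i hi ↦ by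
      rw [hz i ((mem_range.1 hi).trans_le hm), add_sub_cancel_left]
  have hdeviation : ∀ m ≤ L, ‖z m - z 0‖ ≤ L * (x * (2 * ‖z 0‖)) := by
    intro m hm
    calc ‖z m - z 0‖ ≤ ∑ i ∈ range m, x * (2 * ‖z 0‖) := by
          rw [htelescope m hm]
          refine norm_sum_le_of_le _ fun i hi ↦ (hB i _).trans ?_
          gcongr
          exact norm_le_two_mul_of_succ_eq_add hx₀ hx hB hz ((mem_range.1 hi).le.trans hm)
      _ ≤ L * (x * (2 * ‖z 0‖)) := by
          rw [sum_const, card_range, nsmul_eq_mul]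
          gcongr
  calc ‖z L - z 0 - ∑ m ∈ range L, B m (z 0)‖ = ‖∑ m ∈ range L, B m (z m - z 0)‖ := by
        simp only [htelescope L le_rfl, map_sub, sum_sub_distrib]
    _ ≤ ∑ m ∈ range L, x * (L * (x * (2 * ‖z 0‖))) := by
        refine norm_sum_le_of_le _ fun m hm ↦ (hB m _).trans ?_
        gcongr
        exact hdeviation m (mem_range.1 hm).le
    _ = 2 * (L * x) ^ 2 * ‖z 0‖ := by rw [sum_const, card_range, nsmul_eq_mul]; ring

end Perturbation

section Interpolation

lemma exists_bounded_coeff_interpolating {ι 𝕜 : Type*} [NormedField 𝕜] {s : Finset ι} {x : ι → 𝕜}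
    (hx : Set.InjOn x s) :
    ∃ κ, ∀ r : ι → 𝕜, (∀ i ∈ s, ‖r i‖ ≤ 1) → ∃ c : ℕ → 𝕜, (∀ m, ‖c m‖ ≤ κ) ∧
      ∀ i ∈ s, ∑ m ∈ range #s, c m * x i ^ m = r i := by
  classical
  let bound : ℕ → ℝ := fun m ↦ ∑ i ∈ s, ‖(Lagrange.basis s x i).coeff m‖
  have hbound : ∀ m, 0 ≤ bound m := fun m ↦ sum_nonneg fun _ _ ↦ norm_nonneg _
  refine ⟨∑ m ∈ range #s, bound m, fun r hr ↦ ?_⟩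
  let p := Lagrange.interpolate s x r
  have hp : p.degree < #s := Lagrange.degree_interpolate_lt r hx
  refine ⟨p.coeff, fun m ↦ ?_, fun i hi ↦ ?_⟩
  · rcases lt_or_ge m #s with hm | hm
    · calc ‖p.coeff m‖ = ‖∑ i ∈ s, r i * (Lagrange.basis s x i).coeff m‖ := by
            simp only [p, Lagrange.interpolate_apply, Polynomial.finsetSum_coeff,
              Polynomial.coeff_C_mul]
        _ ≤ bound m := norm_sum_le_of_le _ fun i hi ↦ by
            rw [norm_mul]; exact mul_le_of_le_one_left (norm_nonneg _) (hr i hi)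
        _ ≤ ∑ m ∈ range #s, bound m :=
            single_le_sum (fun i _ ↦ hbound i) (mem_range.2 hm)
    · rw [Polynomial.coeff_eq_zero_of_degree_lt (hp.trans_le (by exact_mod_cast hm)), norm_zero]
      exact sum_nonneg fun m _ ↦ hbound m
  · have hp' : p.natDegree < #s := by
      rcases eq_or_ne p 0 with h | h
      · simpa [h] using ⟨i, hi⟩
      · rwa [Polynomial.natDegree_lt_iff_degree_lt h]
    rw [← Lagrange.eval_interpolate_at_node r hx hi]
    exact (Polynomial.eval_eq_sum_range' hp' _).symm

/-- If the nodes and the data are invariant under conjugation, then so are the equations, and the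
real parts of a solution solve them as well. -/
lemma exists_bounded_real_coeff_interpolating {ι : Type*} {s : Finset ι} {x : ι → ℂ}
    (hx : Set.InjOn x s) :
    ∃ κ, ∀ r : ι → ℂ, (∀ i ∈ s, ‖r i‖ ≤ 1) →
      (∀ i ∈ s, ∃ j ∈ s, x j = conj (x i) ∧ r j = conj (r i)) →
      ∃ c : ℕ → ℝ, (∀ m, |c m| ≤ κ) ∧ ∀ i ∈ s, ∑ m ∈ range #s, (c m : ℂ) * x i ^ m = r i := by
  obtain ⟨κ, hκ⟩ := exists_bounded_coeff_interpolating hx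
  refine ⟨κ, fun r hr hconj ↦ ?_⟩
  obtain ⟨c, hc, hcr⟩ := hκ r hr
  refine ⟨fun m ↦ (c m).re, fun m ↦ (abs_re_le_norm _).trans (hc m), fun i hi ↦ ?_⟩
  obtain ⟨j, hj, hxj, hrj⟩ := hconj i hi
  have hcr' : ∑ m ∈ range #s, conj (c m) * x i ^ m = r i := by
    have := congrArg conj (hcr j hj)
    simpa only [map_sum, map_mul, map_pow, hxj, hrj, conj_conj] using this
  calc ∑ m ∈ range #s, ((c m).re : ℂ) * x i ^ m
      = (∑ m ∈ range #s, c m * x i ^ m + ∑ m ∈ range #s, conj (c m) * x i ^ m) / 2 := by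
        simp only [re_eq_add_conj, ← sum_add_distrib, sum_div]
        exact sum_congr rfl fun m _ ↦ by ring
    _ = r i := by rw [hcr i hi, hcr', add_self_div_two]

end Interpolation

section Feedback

/-- The primitive cube root of unity in the upper half plane, an eigenvalue of the real-linear map
`p ↦ I * (p - p.im)` that governs the feedback law. -/
def cubeRoot : ℂ := ⟨-1 / 2, √3 / 2⟩

/-- The real-linear coordinate change `1 ↦ 1`, `I ↦ cubeRoot`, which turns the feedback dynamics
into multiplication by `cubeRoot`. -/
def skew : ℂ →ₗ[ℝ] ℂ := reLm.smulRight 1 + imLm.smulRight cubeRoot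

lemma skew_apply (p : ℂ) : skew p = p.re + p.im * cubeRoot := by
  simp [skew]

lemma normSq_skew (p : ℂ) : normSq (skew p) = p.re ^ 2 - p.re * p.im + p.im ^ 2 := by
  have h3 : √3 * √3 = 3 := Real.mul_self_sqrt (by norm_num)
  simp only [skew_apply, cubeRoot, normSq_apply, add_re, mul_re, add_im, mul_im, ofReal_re,
    ofReal_im]
  linear_combination (p.im ^ 2 / 4) * h3

lemma norm_skew_le (p : ℂ) : ‖skew p‖ ≤ 2 * ‖p‖ := by
  rw [← sq_le_sq₀ (by positivity) (by positivity), mul_pow, Complex.sq_norm, Complex.sq_norm,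
    normSq_skew, normSq_apply]
  nlinarith [sq_nonneg (p.re + p.im)]

lemma norm_le_norm_skew (p : ℂ) : ‖p‖ ≤ 2 * ‖skew p‖ := by
  rw [← sq_le_sq₀ (by positivity) (by positivity), mul_pow, Complex.sq_norm, Complex.sq_norm,
    normSq_skew, normSq_apply]
  nlinarith [sq_nonneg (p.re - p.im)]

lemma norm_skew_mul_le (p c : ℂ) : ‖skew (p * c)‖ ≤ 4 * ‖c‖ * ‖skew p‖ :=
  calc ‖skew (p * c)‖ ≤ 2 * (‖p‖ * ‖c‖) := by rw [← norm_mul]; exact norm_skew_le _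
    _ ≤ 2 * (2 * ‖skew p‖ * ‖c‖) := by gcongr; exact norm_le_norm_skew p
    _ = 4 * ‖c‖ * ‖skew p‖ := by ring

lemma norm_one_add_mul_cubeRoot_le {t : ℝ} (ht₀ : 0 ≤ t) (ht : t ≤ 1 / 2) :
    ‖1 + t * cubeRoot‖ ≤ 1 - t / 4 := by
  have h3 : √3 * √3 = 3 := Real.mul_self_sqrt (by norm_num)
  have hsq : normSq (1 + t * cubeRoot) = 1 - t + t ^ 2 := by
    simp only [cubeRoot, normSq_apply, add_re, mul_re, add_im, mul_im, ofReal_re, ofReal_im,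
      one_re, one_im]
    linear_combination (t ^ 2 / 4) * h3
  rw [← sq_le_sq₀ (by positivity) (by linarith), Complex.sq_norm, hsq]
  nlinarith

/-- The relative rate of change of both amplitudes `z` and `w` at the energies `e` and `-e` under
the feedback law, as a function of `p = z * w`. -/
def feedbackRate (p : ℂ) : ℂ := I / 2 * (1 - p.im / p)

lemma norm_feedbackRate_le (p : ℂ) : ‖feedbackRate p‖ ≤ 1 := by
  have him : ‖(p.im : ℂ) / p‖ ≤ 1 := by
    rw [norm_div, norm_real]
    exact div_le_one_of_le₀ (abs_im_le_norm p) (norm_nonneg p)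
  have hsub : ‖1 - (p.im : ℂ) / p‖ ≤ 2 := (norm_sub_le _ _).trans (by rw [norm_one]; linarith)
  calc ‖feedbackRate p‖ = 1 / 2 * ‖1 - (p.im : ℂ) / p‖ := by simp [feedbackRate]
    _ ≤ 1 := by linarith

lemma skew_mul_feedbackRate (p : ℂ) : skew (p * (2 * feedbackRate p)) = cubeRoot * skew p := by
  have h3 : √3 * √3 = 3 := Real.mul_self_sqrt (by norm_num)
  have hrate : p * (2 * feedbackRate p) = I * (p - p.im) := by
    rcases eq_or_ne p 0 with rfl | hp
    · simp
    · rw [feedbackRate]; field_simp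
  rw [hrate, skew_apply, skew_apply]
  apply Complex.ext <;> simp [cubeRoot]
  · linear_combination (p.im / 4) * h3
  · ring

/-- The Lyapunov function of the feedback law for the pair of amplitudes `z`, `w` at the energies
`e`, `-e`; it is comparable to `‖z‖ ^ 2`, since to first order the feedback law preserves
`‖z‖ / ‖w‖`. -/
def lyap (z w : ℂ) : ℝ := ‖skew (z * w)‖ * (‖z‖ / ‖w‖)

lemma lyap_nonneg (z w : ℂ) : 0 ≤ lyap z w := by
  rw [lyap]; positivity

lemma sq_norm_le_lyap (z : ℂ) {w : ℂ} (hw : w ≠ 0) : ‖z‖ ^ 2 ≤ 2 * lyap z w := by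
  have hw' : ‖w‖ ≠ 0 := norm_ne_zero_iff.2 hw
  calc ‖z‖ ^ 2 = ‖z * w‖ * (‖z‖ / ‖w‖) := by rw [norm_mul]; field_simp
    _ ≤ 2 * ‖skew (z * w)‖ * (‖z‖ / ‖w‖) := by gcongr; exact norm_le_norm_skew _
    _ = 2 * lyap z w := by rw [lyap]; ring

lemma exists_eq_mul_one_add_add {z z' β : ℂ} {η : ℝ} (hz : z ≠ 0)
    (h : ‖z' - z - z * β‖ ≤ η * ‖z‖) : ∃ a, ‖a‖ ≤ η ∧ z' = z * (1 + β + a) := by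
  refine ⟨(z' - z - z * β) / z, ?_, by field_simp; ring⟩
  rwa [norm_div, div_le_iff₀ (norm_pos_iff.2 hz)]

lemma norm_skew_perturbed_le {p ρ : ℂ} {t : ℝ} (ht₀ : 0 ≤ t) (ht : t ≤ 1 / 2) :
    ‖skew (p * (1 + 2 * (t * feedbackRate p) + ρ))‖ ≤ (1 - t / 4 + 4 * ‖ρ‖) * ‖skew p‖ := by
  have hsplit : skew (p * (1 + 2 * (t * feedbackRate p) + ρ)) =
      (1 + t * cubeRoot) * skew p + skew (p * ρ) := by
    rw [show p * (1 + 2 * (t * feedbackRate p) + ρ) =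
      p + t • (p * (2 * feedbackRate p)) + p * ρ by rw [real_smul]; ring, map_add, map_add,
      map_smul, skew_mul_feedbackRate, real_smul]
    ring
  calc _ ≤ ‖1 + t * cubeRoot‖ * ‖skew p‖ + 4 * ‖ρ‖ * ‖skew p‖ := by
        rw [hsplit, ← norm_mul]
        exact norm_add_le_of_le le_rfl (norm_skew_mul_le p ρ)
    _ ≤ (1 - t / 4) * ‖skew p‖ + 4 * ‖ρ‖ * ‖skew p‖ := by
        gcongr; exact norm_one_add_mul_cubeRoot_le ht₀ ht
    _ = _ := by ring

lemma norm_one_add_le_mul {β a b : ℂ} {η : ℝ} (hβ : ‖β‖ ≤ 1 / 4) (ha : ‖a‖ ≤ η) (hb : ‖b‖ ≤ η)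
    (hη : η ≤ 1 / 4) : ‖1 + β + a‖ ≤ (1 + 4 * η) * ‖1 + β + b‖ := by
  have hlower : 1 / 2 ≤ ‖1 + β + b‖ := by
    have h := norm_le_norm_add_norm_sub' 1 (1 + β + b)
    rw [norm_one, show 1 - (1 + β + b) = -(β + b) by ring, norm_neg] at h
    linarith [norm_add_le β b]
  have hsub : ‖1 + β + a‖ ≤ ‖1 + β + b‖ + ‖a - b‖ := by
    simpa using norm_le_norm_add_norm_sub' (1 + β + a) (1 + β + b)
  nlinarith [norm_sub_le a b, norm_nonneg a]

lemma norm_quadratic_remainder_le {β a b : ℂ} {t : ℝ} (ht : t ≤ 1 / 256) (hβ : ‖β‖ ≤ t)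
    (ha : ‖a‖ ≤ t / 256) (hb : ‖b‖ ≤ t / 256) :
    ‖β ^ 2 + (a + b) * (1 + β) + a * b‖ ≤ t / 64 := by
  have ht₀ : 0 ≤ t := (norm_nonneg _).trans hβ
  have hββ : ‖β ^ 2‖ ≤ t * (1 / 256) := by
    rw [norm_pow, sq]; gcongr; exact hβ.trans ht
  have hsum : ‖(a + b) * (1 + β)‖ ≤ (t / 256 + t / 256) * (1 + 1 / 256) := by
    rw [norm_mul]
    gcongr
    · exact norm_add_le_of_le ha hb
    · exact norm_add_le_of_le norm_one.le (hβ.trans ht)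
  have hab : ‖a * b‖ ≤ t / 256 * (1 / 256) := by
    rw [norm_mul]; gcongr; linarith
  linarith [norm_add₃_le (a := β ^ 2) (b := (a + b) * (1 + β)) (c := a * b)]

lemma lyap_le_of_feedback {z w z' w' : ℂ} {t : ℝ} (hz : z ≠ 0) (hw : w ≠ 0) (ht₀ : 0 ≤ t)
    (ht : t ≤ 1 / 256)
    (hz' : ‖z' - z - z * (t * feedbackRate (z * w))‖ ≤ t / 256 * ‖z‖)
    (hw' : ‖w' - w - w * (t * feedbackRate (z * w))‖ ≤ t / 256 * ‖w‖) :
    lyap z' w' ≤ (1 - t / 8) * lyap z w := by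
  set β : ℂ := t * feedbackRate (z * w) with hβ_def
  obtain ⟨a, ha, rfl⟩ := exists_eq_mul_one_add_add hz hz'
  obtain ⟨b, hb, rfl⟩ := exists_eq_mul_one_add_add hw hw'
  have hβ : ‖β‖ ≤ t := by
    rw [hβ_def, norm_mul, norm_real, Real.norm_of_nonneg ht₀]
    exact mul_le_of_le_one_right ht₀ (norm_feedbackRate_le _)
  have hρ := norm_quadratic_remainder_le ht hβ ha hb
  have hskew : ‖skew (z * (1 + β + a) * (w * (1 + β + b)))‖ ≤
      (1 - 3 / 16 * t) * ‖skew (z * w)‖ := by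
    rw [show z * (1 + β + a) * (w * (1 + β + b)) =
      z * w * (1 + 2 * β + (β ^ 2 + (a + b) * (1 + β) + a * b)) by ring]
    refine (norm_skew_perturbed_le ht₀ (by linarith)).trans ?_
    gcongr
    linarith
  have hratio : ‖z * (1 + β + a)‖ / ‖w * (1 + β + b)‖ ≤ (1 + t / 64) * (‖z‖ / ‖w‖) := by
    rw [norm_mul, norm_mul, mul_div_mul_comm, mul_comm]
    gcongr
    refine div_le_of_le_mul₀ (norm_nonneg _) (by positivity) ?_
    calc ‖1 + β + a‖ ≤ (1 + 4 * (t / 256)) * ‖1 + β + b‖ :=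
          norm_one_add_le_mul (by linarith) ha hb (by linarith)
      _ = (1 + t / 64) * ‖1 + β + b‖ := by ring
  calc lyap (z * (1 + β + a)) (w * (1 + β + b))
      ≤ (1 - 3 / 16 * t) * ‖skew (z * w)‖ * ((1 + t / 64) * (‖z‖ / ‖w‖)) := by
        have : 0 ≤ 1 - 3 / 16 * t := by linarith
        rw [lyap]
        gcongr
    _ = (1 - 3 / 16 * t) * (1 + t / 64) * lyap z w := by rw [lyap]; ring
    _ ≤ (1 - t / 8) * lyap z w := by
        gcongr
        · exact lyap_nonneg z w
        · nlinarith

/-- The target value of the moment of the potential against the resonant oscillation at an energy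
at which the amplitude is `z`, when the amplitude at the opposite energy is `w`. -/
def feedback (z w : ℂ) : ℂ := (z * w).im / (conj z * w)

lemma norm_feedback_le (z w : ℂ) : ‖feedback z w‖ ≤ 1 := by
  rw [feedback, norm_div, norm_mul, RCLike.norm_conj, ← norm_mul, norm_real]
  exact div_le_one_of_le₀ (abs_im_le_norm _) (norm_nonneg _)

lemma feedback_swap (z w : ℂ) : feedback w z = conj (feedback z w) := by
  simp only [feedback, map_div₀, map_mul, conj_conj, conj_ofReal, mul_comm w z, mul_comm z (conj w)]

lemma I_div_two_mul_sub_feedback {z w : ℂ} (hz : z ≠ 0) :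
    I / 2 * (z - feedback z w * conj z) = z * feedbackRate (z * w) := by
  have hz' : conj z ≠ 0 := (map_ne_zero _).2 hz
  rw [feedback, feedbackRate]
  field_simp

end Feedback

section Amplitude

/-- The quasimomentum `k ∈ [0, π]` of an energy `e = 2 cos k`. -/
def quasimomentum (e : ℝ) : ℝ := Real.arccos (e / 2)

lemma two_mul_cos_quasimomentum {e : ℝ} (he : e ∈ Set.Icc (-2) 2) :
    2 * Real.cos (quasimomentum e) = e := by
  rw [quasimomentum, Real.cos_arccos (by linarith [he.1]) (by linarith [he.2])]
  ring

lemma sin_quasimomentum_pos {e : ℝ} (he : e ∈ Set.Ioo (-2) 2) :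
    0 < Real.sin (quasimomentum e) := by
  rw [quasimomentum, Real.sin_arccos]
  exact Real.sqrt_pos.2 (by nlinarith [he.1, he.2])

lemma sin_quasimomentum_nonneg (e : ℝ) : 0 ≤ Real.sin (quasimomentum e) :=
  Real.sin_nonneg_of_nonneg_of_le_pi (Real.arccos_nonneg _) (Real.arccos_le_pi _)

lemma quasimomentum_neg (e : ℝ) : quasimomentum (-e) = Real.pi - quasimomentum e := by
  rw [quasimomentum, neg_div, Real.arccos_neg, quasimomentum]

/-- The Bloch multiplier `exp (i k)`, by which one of the solutions of the free equation at the
energy `2 cos k` gets multiplied at each step. -/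
def bloch (e : ℝ) : ℂ := exp (quasimomentum e * I)

lemma bloch_re (e : ℝ) : (bloch e).re = Real.cos (quasimomentum e) := exp_ofReal_mul_I_re _

lemma bloch_im (e : ℝ) : (bloch e).im = Real.sin (quasimomentum e) := exp_ofReal_mul_I_im _

lemma norm_bloch (e : ℝ) : ‖bloch e‖ = 1 := norm_exp_ofReal_mul_I _

lemma bloch_mul_conj (e : ℝ) : bloch e * conj (bloch e) = 1 := by
  simp [mul_conj, normSq_eq_norm_sq, norm_bloch]

lemma bloch_neg (e : ℝ) : bloch (-e) = -conj (bloch e) := by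
  apply Complex.ext <;> simp [bloch_re, bloch_im, quasimomentum_neg]

/-- The multiplier `exp (-2 i k)`: a potential acts resonantly at the energy `2 cos k` through its
correlations with the powers of this number. -/
def node (e : ℝ) : ℂ := conj (bloch e) ^ 2

lemma norm_node (e : ℝ) : ‖node e‖ = 1 := by simp [node, norm_bloch]

lemma node_neg (e : ℝ) : node (-e) = conj (node e) := by simp [node, bloch_neg]

lemma node_two : node 2 = 1 := by simp [node, bloch, quasimomentum]

lemma injOn_node : Set.InjOn node (Set.Ioc (-2) 2) := by
  intro a ha b hb hab
  have hcos : ∀ {e : ℝ}, e ∈ Set.Ioc (-2) 2 → 2 * (bloch e).re = e := fun he ↦ by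
    rw [bloch_re, two_mul_cos_quasimomentum (Set.Ioc_subset_Icc_self he)]
  have hsq : bloch a ^ 2 = bloch b ^ 2 := (starRingEnd ℂ).injective (by simpa [node] using hab)
  rcases sq_eq_sq_iff_eq_or_eq_neg.1 hsq with h | h
  · rw [← hcos ha, ← hcos hb, h]
  · have hab' : a = -b := by rw [← hcos ha, ← hcos hb, h, neg_re, mul_neg]
    have hsin : 0 < Real.sin (quasimomentum b) :=
      sin_quasimomentum_pos ⟨hb.1, by linarith [ha.1]⟩
    have him := congrArg im h
    rw [neg_im, bloch_im, bloch_im] at him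
    linarith [sin_quasimomentum_nonneg a]

/-- The complex Prüfer amplitude of `u` at the energy `e`: the coefficient of `u` along the free
solution `exp (i k n)`, up to a constant. It is constant wherever the potential vanishes. -/
def amp (u : ℕ → ℝ) (e : ℝ) (n : ℕ) : ℂ :=
  conj (bloch e) ^ n * (u (n + 1) - conj (bloch e) * u n)

lemma norm_amp (u : ℕ → ℝ) (e : ℝ) (n : ℕ) :
    ‖amp u e n‖ = ‖(u (n + 1) : ℂ) - conj (bloch e) * u n‖ := by
  rw [amp, norm_mul, norm_pow, RCLike.norm_conj, norm_bloch, one_pow, one_mul]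

lemma abs_mul_sin_le_norm_amp (u : ℕ → ℝ) (e : ℝ) (n : ℕ) :
    |u n| * Real.sin (quasimomentum e) ≤ ‖amp u e n‖ := by
  have him : ((u (n + 1) : ℂ) - conj (bloch e) * u n).im = u n * Real.sin (quasimomentum e) := by
    simp [bloch_im, mul_comm]
  rw [norm_amp, ← abs_of_nonneg (sin_quasimomentum_nonneg e), ← abs_mul, ← him]
  exact abs_im_le_norm _

lemma amp_eq_zero {u : ℕ → ℝ} {e : ℝ} (he : e ∈ Set.Ioo (-2) 2) {n : ℕ} (h : amp u e n = 0) :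
    u n = 0 ∧ u (n + 1) = 0 := by
  have hn : u n = 0 := by
    have hle := abs_mul_sin_le_norm_amp u e n
    rw [h, norm_zero] at hle
    exact abs_nonpos_iff.1 (nonpos_of_mul_nonpos_left hle (sin_quasimomentum_pos he))
  have hnorm := norm_amp u e n
  rw [h, norm_zero, hn] at hnorm
  exact ⟨hn, by simpa using hnorm.symm⟩

/-- The change of the amplitude at the energy `2 cos k` caused by the value `sin k` of the
potential at `n + 1`, as a function of the amplitude. -/
def ampGenerator (e : ℝ) (n : ℕ) : ℂ →ₗ[ℝ] ℂ :=
  (I / 2) • (LinearMap.id - node e ^ (n + 1) • conjAe.toLinearMap)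

lemma ampGenerator_apply (e : ℝ) (n : ℕ) (y : ℂ) :
    ampGenerator e n y = I / 2 * (y - node e ^ (n + 1) * conj y) := by
  simp [ampGenerator]

lemma norm_ampGenerator_le (e : ℝ) (n : ℕ) (y : ℂ) : ‖ampGenerator e n y‖ ≤ ‖y‖ := by
  have h : ‖y - node e ^ (n + 1) * conj y‖ ≤ ‖y‖ + ‖y‖ :=
    norm_sub_le_of_le le_rfl (by simp [norm_node])
  rw [ampGenerator_apply, norm_mul, norm_div, norm_I, RCLike.norm_ofNat]
  linarith

lemma sum_smul_ampGenerator (e : ℝ) (n L : ℕ) (v : ℕ → ℝ) (y : ℂ) :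
    ∑ m ∈ range L, v m • ampGenerator e (n + m) y =
      I / 2 * ((∑ m ∈ range L, v m : ℝ) * y -
        node e ^ (n + 1) * (∑ m ∈ range L, (v m : ℂ) * node e ^ m) * conj y) := by
  push_cast
  simp only [sum_mul, mul_sum, ← sum_sub_distrib]
  refine sum_congr rfl fun m _ ↦ ?_
  rw [ampGenerator_apply, real_smul]
  ring

lemma amp_succ {u : ℕ → ℝ} {e v : ℝ} {n : ℕ} (he : e ∈ Set.Ioo (-2) 2)
    (hu : u (n + 2) = (e - v) * u (n + 1) - u n) :
    amp u e (n + 1) =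
      amp u e n + (v / Real.sin (quasimomentum e)) • ampGenerator e n (amp u e n) := by
  have hs : (Real.sin (quasimomentum e) : ℂ) ≠ 0 := by
    exact_mod_cast (sin_quasimomentum_pos he).ne'
  have hmul := bloch_mul_conj e
  have hadd : bloch e + conj (bloch e) = e := by
    rw [add_conj, bloch_re, two_mul_cos_quasimomentum (Set.Ioo_subset_Icc_self he)]
  have hrate : v / Real.sin (quasimomentum e) * (I / 2 * (bloch e - conj (bloch e))) = -v := by
    rw [sub_conj, bloch_im]
    push_cast at hs ⊢
    field_simp
    rw [I_sq]
    ring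
  have hconj : node e ^ (n + 1) * conj (amp u e n) =
      conj (bloch e) ^ (n + 2) * (u (n + 1) - bloch e * u n) := by
    simp only [amp, node, map_mul, map_sub, map_pow, conj_conj, conj_ofReal]
    linear_combination (conj (bloch e) ^ (n + 2) * (u (n + 1) - bloch e * u n)) *
      (congrArg (· ^ n) hmul)
  rw [real_smul, ampGenerator_apply, hconj]
  simp only [amp, hu, ofReal_sub, ofReal_mul, ofReal_div]
  linear_combination -(conj (bloch e) ^ (n + 1) * u (n + 1)) * (hrate + hadd) +
    conj (bloch e) ^ n * (u (n + 1) + v / Real.sin (quasimomentum e) * (I / 2) *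
      (u (n + 1) - conj (bloch e) * u n)) * hmul

/-- To first order in `δ`, all that matters about the window is the moment of `v` at the node. -/
lemma amp_window {u v : ℕ → ℝ} {e δ κ : ℝ} {n L : ℕ} (he : e ∈ Set.Ioo (-2) 2) (hδ : 0 ≤ δ)
    (hu : ∀ m < L, u (n + m + 2) = (e - δ * v m) * u (n + m + 1) - u (n + m))
    (hv : ∀ m, |v m| ≤ κ) (hsum : ∑ m ∈ range L, v m = 1)
    (hsmall : 2 * L * (δ / Real.sin (quasimomentum e) * κ) ≤ 1) :
    (∀ m ≤ L, ‖amp u e (n + m)‖ ≤ 2 * ‖amp u e n‖) ∧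
      ‖amp u e (n + L) - amp u e n - (δ / Real.sin (quasimomentum e) : ℝ) * (I / 2 * (amp u e n -
        node e ^ (n + 1) * (∑ m ∈ range L, (v m : ℂ) * node e ^ m) * conj (amp u e n)))‖ ≤
        2 * (L * (δ / Real.sin (quasimomentum e) * κ)) ^ 2 * ‖amp u e n‖ := by
  set t := δ / Real.sin (quasimomentum e) with ht_def
  have ht : 0 ≤ t := div_nonneg hδ (sin_quasimomentum_nonneg e)
  have hκ : 0 ≤ κ := (abs_nonneg _).trans (hv 0)
  let B : ℕ → ℂ →ₗ[ℝ] ℂ := fun m ↦ t • v m • ampGenerator e (n + m)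
  have hB : ∀ m y, ‖B m y‖ ≤ t * κ * ‖y‖ := fun m y ↦
    calc ‖B m y‖ = t * (|v m| * ‖ampGenerator e (n + m) y‖) := by
          simp [B, abs_of_nonneg ht]
      _ ≤ t * (κ * ‖y‖) := by gcongr; exacts [hv m, norm_ampGenerator_le e _ y]
      _ = t * κ * ‖y‖ := by ring
  have hstep : ∀ m < L, amp u e (n + (m + 1)) = amp u e (n + m) + B m (amp u e (n + m)) := by
    intro m hm
    rw [← add_assoc, amp_succ he (hu m hm), LinearMap.smul_apply, LinearMap.smul_apply, smul_smul,
      ht_def, div_mul_eq_mul_div]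
  have hsumB : ∑ m ∈ range L, B m (amp u e n) = t * (I / 2 * (amp u e n -
      node e ^ (n + 1) * (∑ m ∈ range L, (v m : ℂ) * node e ^ m) * conj (amp u e n))) := by
    simp only [B, LinearMap.smul_apply, ← smul_sum]
    rw [sum_smul_ampGenerator, hsum, ofReal_one, one_mul, real_smul]
  have hx : 0 ≤ t * κ := mul_nonneg ht hκ
  refine ⟨fun m hm ↦ norm_le_two_mul_of_succ_eq_add (z := fun m ↦ amp u e (n + m))
    hx hsmall hB hstep hm, ?_⟩
  rw [← hsumB]
  exact norm_sub_sub_sum_le_of_succ_eq_add (z := fun m ↦ amp u e (n + m)) hx hsmall hB hstep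

/-- The additional node `1 = node 2` normalizes the sum of the coefficients. -/
lemma exists_feedback_profile {S : Finset ℝ} (hS : ∀ e ∈ S, e ∈ Set.Ioo (-2) 2)
    (hneg : ∀ e ∈ S, -e ∈ S) :
    ∃ κ, 1 ≤ κ ∧ ∀ (n : ℕ) (z : ℝ → ℂ), ∃ v : ℕ → ℝ, (∀ m, |v m| ≤ κ) ∧
      ∑ m ∈ range (#S + 1), v m = 1 ∧
      ∀ e ∈ S, node e ^ (n + 1) * ∑ m ∈ range (#S + 1), (v m : ℂ) * node e ^ m =
        feedback (z e) (z (-e)) := by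
  have h2 : 2 ∉ S := fun h ↦ lt_irrefl _ (hS 2 h).2
  have hinj : Set.InjOn node (insert 2 S : Finset ℝ) := by
    refine injOn_node.mono fun e he ↦ ?_
    rcases mem_insert.1 he with rfl | he
    · norm_num
    · exact Set.Ioo_subset_Ioc_self (hS e he)
  obtain ⟨κ, hκ⟩ := exists_bounded_real_coeff_interpolating hinj
  refine ⟨max 1 κ, le_max_left _ _, fun n z ↦ ?_⟩
  let r : ℝ → ℂ := Function.update
    (fun e ↦ conj (node e) ^ (n + 1) * feedback (z e) (z (-e))) 2 1
  have hr2 : r 2 = 1 := Function.update_self ..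
  have hrS : ∀ e ∈ S, r e = conj (node e) ^ (n + 1) * feedback (z e) (z (-e)) := fun e he ↦
    Function.update_of_ne (ne_of_mem_of_not_mem he h2) ..
  obtain ⟨v, hv, hvr⟩ := hκ r
    (by
      refine (forall_mem_insert ..).2 ⟨by simp [hr2], fun e he ↦ ?_⟩
      simpa [hrS e he, norm_node] using norm_feedback_le _ _)
    (by
      refine (forall_mem_insert ..).2 ⟨⟨2, by simp [hr2, node_two]⟩, fun e he ↦
        ⟨-e, mem_insert_of_mem (hneg e he), node_neg e, ?_⟩⟩
      simp [hrS _ he, hrS _ (hneg e he), node_neg, feedback_swap (z e)])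
  rw [card_insert_of_notMem h2] at hvr
  refine ⟨v, fun m ↦ (hv m).trans (le_max_right _ _), ?_, fun e he ↦ ?_⟩
  · have hsum := hvr 2 (mem_insert_self _ _)
    simp only [node_two, one_pow, mul_one, hr2] at hsum
    exact_mod_cast hsum
  · rw [hvr e (mem_insert_of_mem he), hrS e he, ← mul_assoc, ← mul_pow, mul_conj,
      normSq_eq_norm_sq, norm_node]
    simp

end Amplitude

section Solutions

variable {V W : ℕ → ℝ} {φ : ℝ → ℝ} {e : ℝ} {n : ℕ}

/-- The solution of the eigenvalue equation of `Δ + V` at the energy `e` with boundary phase `θ`,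
that is, with initial values `cos θ` and `sin θ`. -/
def sol (V : ℕ → ℝ) (θ e : ℝ) : ℕ → ℝ
  | 0 => Real.cos θ
  | 1 => Real.sin θ
  | n + 2 => (e - V (n + 1)) * sol V θ e (n + 1) - sol V θ e n

lemma sol_add_two (V : ℕ → ℝ) (θ e : ℝ) (n : ℕ) :
    sol V θ e (n + 2) = (e - V (n + 1)) * sol V θ e (n + 1) - sol V θ e n := rfl

lemma sol_congr (θ e : ℝ) (h : ∀ i ≤ n, V i = W i) :
    ∀ m ≤ n + 1, sol V θ e m = sol W θ e m
  | 0, _ => rfl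
  | 1, _ => rfl
  | m + 2, hm => by
    rw [sol_add_two, sol_add_two, h _ (by lia), sol_congr θ e h (m + 1) (by lia),
      sol_congr θ e h m (by lia)]

lemma sol_ne_zero_or_succ_ne_zero (V : ℕ → ℝ) (θ e : ℝ) (n : ℕ) :
    sol V θ e n ≠ 0 ∨ sol V θ e (n + 1) ≠ 0 := by
  induction n with
  | zero =>
    by_contra! h
    have hsq := Real.sin_sq_add_cos_sq θ
    rw [show Real.cos θ = 0 from h.1, show Real.sin θ = 0 from h.2] at hsq
    norm_num at hsq
  | succ n ih =>
    by_contra! h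
    have hzero := sol_add_two V θ e n
    rw [h.1, h.2] at hzero
    exact ih.elim (fun h' ↦ h' (by linarith)) fun h' ↦ h' h.1

lemma sol_ne_zero (V : ℕ → ℝ) (θ e : ℝ) : sol V θ e ≠ 0 := fun h ↦
  (sol_ne_zero_or_succ_ne_zero V θ e 0).elim (· (congrFun h 0)) (· (congrFun h 1))

/-- The Prüfer amplitude, at the energy `e`, of the solution with boundary phase `φ e`. -/
def solAmp (V : ℕ → ℝ) (φ : ℝ → ℝ) (e : ℝ) (n : ℕ) : ℂ := amp (sol V (φ e) e) e n

lemma solAmp_congr (φ : ℝ → ℝ) (e : ℝ) (h : ∀ i ≤ n, V i = W i) :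
    solAmp V φ e n = solAmp W φ e n := by
  rw [solAmp, solAmp, amp, amp, sol_congr _ _ h n n.le_succ, sol_congr _ _ h (n + 1) le_rfl]

lemma solAmp_ne_zero (V : ℕ → ℝ) (φ : ℝ → ℝ) (he : e ∈ Set.Ioo (-2) 2) (n : ℕ) :
    solAmp V φ e n ≠ 0 := fun h ↦
  have hzero := amp_eq_zero he h
  (sol_ne_zero_or_succ_ne_zero V (φ e) e n).elim (· hzero.1) (· hzero.2)

variable {v : ℕ → ℝ} {w : ℂ} {δ κ : ℝ} {L : ℕ}

lemma solAmp_window (he : e ∈ Set.Ioo (-2) 2) (hδ : 0 ≤ δ) (hLκ : 1 ≤ L * κ)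
    (hsmall : 512 * (L * κ) ^ 2 * (δ / Real.sin (quasimomentum e)) ≤ 1)
    (hV : ∀ m < L, V (n + m + 1) = δ * v m) (hv : ∀ m, |v m| ≤ κ) (hsum : ∑ m ∈ range L, v m = 1)
    (hmoment : node e ^ (n + 1) * ∑ m ∈ range L, (v m : ℂ) * node e ^ m =
      feedback (solAmp V φ e n) w) :
    (∀ m ≤ L, ‖solAmp V φ e (n + m)‖ ≤ 2 * ‖solAmp V φ e n‖) ∧
      ‖solAmp V φ e (n + L) - solAmp V φ e n - solAmp V φ e n *
        ((δ / Real.sin (quasimomentum e) : ℝ) * feedbackRate (solAmp V φ e n * w))‖ ≤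
        δ / Real.sin (quasimomentum e) / 256 * ‖solAmp V φ e n‖ := by
  set t := δ / Real.sin (quasimomentum e)
  have ht : 0 ≤ t := div_nonneg hδ (sin_quasimomentum_nonneg e)
  have hsmall' : 2 * L * (t * κ) ≤ 1 := by nlinarith [mul_nonneg ht (by linarith : 0 ≤ L * κ)]
  obtain ⟨hnorm, herror⟩ := amp_window (u := sol V (φ e) e) he hδ
    (fun m hm ↦ by rw [sol_add_two, hV m hm]) hv hsum hsmall'
  refine ⟨hnorm, ?_⟩
  rw [hmoment, ← solAmp, ← solAmp, I_div_two_mul_sub_feedback (solAmp_ne_zero V φ he n)] at herror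
  rw [mul_left_comm]
  refine herror.trans ?_
  gcongr
  nlinarith

lemma lyap_solAmp_window_le (he : e ∈ Set.Ioo (-2) 2) (hδ : 0 ≤ δ) (hLκ : 1 ≤ L * κ)
    (hsmall : 512 * (L * κ) ^ 2 * (δ / Real.sin (quasimomentum e)) ≤ 1)
    (hV : ∀ m < L, V (n + m + 1) = δ * v m) (hv : ∀ m, |v m| ≤ κ) (hsum : ∑ m ∈ range L, v m = 1)
    (hmoment : node e ^ (n + 1) * ∑ m ∈ range L, (v m : ℂ) * node e ^ m =
      feedback (solAmp V φ e n) (solAmp V φ (-e) n))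
    (hmoment' : node (-e) ^ (n + 1) * ∑ m ∈ range L, (v m : ℂ) * node (-e) ^ m =
      feedback (solAmp V φ (-e) n) (solAmp V φ e n)) :
    lyap (solAmp V φ e (n + L)) (solAmp V φ (-e) (n + L)) ≤
      (1 - δ / 8) * lyap (solAmp V φ e n) (solAmp V φ (-e) n) := by
  have he' : -e ∈ Set.Ioo (-2) 2 := by rwa [Set.neg_mem_Ioo_iff, neg_neg]
  have hsin : Real.sin (quasimomentum (-e)) = Real.sin (quasimomentum e) := by
    rw [quasimomentum_neg, Real.sin_pi_sub]
  have herror := (solAmp_window he hδ hLκ hsmall hV hv hsum hmoment).2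
  have herror' := (solAmp_window he' hδ hLκ (by rwa [hsin]) hV hv hsum hmoment').2
  rw [hsin, mul_comm (solAmp V φ (-e) n) (solAmp V φ e n)] at herror'
  have ht : δ ≤ δ / Real.sin (quasimomentum e) :=
    le_div_self hδ (sin_quasimomentum_pos he) (Real.sin_le_one _)
  refine (lyap_le_of_feedback (solAmp_ne_zero V φ he n) (solAmp_ne_zero V φ he' n) (hδ.trans ht)
    (by nlinarith) herror herror').trans ?_
  gcongr
  exact lyap_nonneg _ _

end Solutions

section DecayWindow

variable {h : ℕ → ℝ} {φ : ℝ → ℝ} {S T : Set ℝ} {V W : ℕ → ℝ} {n n' : ℕ}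

/-- On the window `(n, n']` the potential `V` obeys the bound given by `h`, and it makes the
solutions at the energies in `S` decay at least as fast as `1 / (n + 1)`, in terms of the Lyapunov
function, while their amplitudes never more than double inside the window. -/
structure IsDecayWindow (h : ℕ → ℝ) (φ : ℝ → ℝ) (S : Set ℝ) (V : ℕ → ℝ) (n n' : ℕ) : Prop where
  lt : n < n'
  succ_le : n' + 1 ≤ 2 * (n + 1)
  abs_le : ∀ i ∈ Set.Ioc n n', |V i| ≤ h i / (1 + i)
  lyap_le : ∀ e ∈ S, lyap (solAmp V φ e n') (solAmp V φ (-e) n') * (n' + 1) ^ 2 ≤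
    lyap (solAmp V φ e n) (solAmp V φ (-e) n) * (n + 1) ^ 2
  norm_le : ∀ e ∈ S, ∀ i ∈ Set.Icc n n', ‖solAmp V φ e i‖ ≤ 2 * ‖solAmp V φ e n‖

lemma IsDecayWindow.congr (hV : IsDecayWindow h φ S V n n') (hVW : ∀ i ≤ n', V i = W i) :
    IsDecayWindow h φ S W n n' := by
  have hamp : ∀ e, ∀ i ≤ n', solAmp W φ e i = solAmp V φ e i := fun e i hi ↦
    (solAmp_congr φ e fun j hj ↦ hVW j (hj.trans hi)).symm
  refine ⟨hV.lt, hV.succ_le, fun i hi ↦ hVW i hi.2 ▸ hV.abs_le i hi, fun e he ↦ ?_,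
    fun e he i hi ↦ ?_⟩
  · simpa only [hamp _ _ le_rfl, hamp _ _ hV.lt.le] using hV.lyap_le e he
  · simpa only [hamp _ _ hi.2, hamp _ _ hV.lt.le] using hV.norm_le e he i hi

lemma IsDecayWindow.anti (hV : IsDecayWindow h φ T V n n') (hST : S ⊆ T) :
    IsDecayWindow h φ S V n n' :=
  ⟨hV.lt, hV.succ_le, hV.abs_le, fun e he ↦ hV.lyap_le e (hST he), fun e he ↦ hV.norm_le e (hST he)⟩

lemma IsDecayWindow.sq_sol_mul_le (hV : IsDecayWindow h φ S V n n') {e : ℝ} (heS : e ∈ S)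
    (he : e ∈ Set.Ioo (-2) 2) {i : ℕ} (hi : i ∈ Set.Icc n n') :
    (sol V (φ e) e i * Real.sin (quasimomentum e)) ^ 2 * (i + 1) ^ 2 ≤
      32 * (lyap (solAmp V φ e n) (solAmp V φ (-e) n) * (n + 1) ^ 2) := by
  have he' : -e ∈ Set.Ioo (-2) 2 := by rwa [Set.neg_mem_Ioo_iff, neg_neg]
  have hamp : |sol V (φ e) e i * Real.sin (quasimomentum e)| ≤ 2 * ‖solAmp V φ e n‖ := by
    rw [abs_mul, abs_of_nonneg (sin_quasimomentum_nonneg e)]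
    exact (abs_mul_sin_le_norm_amp _ e i).trans (hV.norm_le e heS i hi)
  have hin : (i + 1 : ℝ) ≤ 2 * (n + 1) := by
    exact_mod_cast (Nat.succ_le_succ hi.2).trans hV.succ_le
  calc (sol V (φ e) e i * Real.sin (quasimomentum e)) ^ 2 * (i + 1) ^ 2
      ≤ (2 * ‖solAmp V φ e n‖) ^ 2 * (2 * (n + 1)) ^ 2 := by
        rw [← sq_abs (_ * _)]
        gcongr
    _ = 16 * (‖solAmp V φ e n‖ ^ 2 * (n + 1) ^ 2) := by ring
    _ ≤ 16 * (2 * lyap (solAmp V φ e n) (solAmp V φ (-e) n) * (n + 1) ^ 2) := by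
        gcongr
        exact sq_norm_le_lyap _ (solAmp_ne_zero V φ he' n)
    _ = _ := by ring

lemma summable_sq_sol {t : ℕ → ℕ} {e : ℝ} (he : e ∈ Set.Ioo (-2) 2) (ht : StrictMono t)
    (hV : ∀ᶠ m in atTop, IsDecayWindow h φ {e} V (t m) (t (m + 1))) :
    Summable fun n ↦ sol V (φ e) e n ^ 2 := by
  obtain ⟨M, hM⟩ := eventually_atTop.1 hV
  let F : ℕ → ℝ := fun n ↦ lyap (solAmp V φ e n) (solAmp V φ (-e) n) * (n + 1) ^ 2
  have hF : ∀ m ≥ M, F (t m) ≤ F (t M) := by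
    intro m hm
    induction m, hm using Nat.le_induction with
    | base => rfl
    | succ m hm ih => exact ((hM m hm).lyap_le e rfl).trans ih
  have hs := sin_quasimomentum_pos he
  have hdecay : ∀ i > t M, sol V (φ e) e i ^ 2 ≤
      32 * F (t M) / Real.sin (quasimomentum e) ^ 2 * (1 / (i + 1 : ℕ) ^ 2) := by
    intro i hi
    obtain ⟨m, hm, hm'⟩ := ht.exists_between_of_tendsto_atTop ht.tendsto_atTop
      ((ht.monotone M.zero_le).trans_lt hi)
    have hMm : M ≤ m := Nat.lt_succ_iff.1 (ht.lt_iff_lt.1 (hi.trans_le hm'))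
    have hbound := ((hM _ hMm).sq_sol_mul_le rfl he ⟨hm.le, hm'⟩).trans
      (mul_le_mul_of_nonneg_left (hF _ hMm) (by norm_num))
    rw [div_mul_div_comm, mul_one, le_div_iff₀ (by positivity)]
    push_cast
    linarith
  refine .of_norm_bounded_eventually_nat
    (((summable_nat_add_iff 1).2 (Real.summable_one_div_nat_pow.2 one_lt_two)).mul_left
      (32 * F (t M) / Real.sin (quasimomentum e) ^ 2)) ?_
  filter_upwards [eventually_gt_atTop (t M)] with i hi
  rw [Real.norm_of_nonneg (sq_nonneg _)]
  exact hdecay i hi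

/-- Every potential can be modified beyond `n` so as to have a decay window starting at `n`. -/
def HasDecayWindow (h : ℕ → ℝ) (φ : ℝ → ℝ) (S : Set ℝ) (n : ℕ) : Prop :=
  ∀ V : ℕ → ℝ, ∃ (W : ℕ → ℝ) (n' : ℕ), (∀ i ≤ n, W i = V i) ∧ IsDecayWindow h φ S W n n'

lemma HasDecayWindow.anti (hn : HasDecayWindow h φ T n) (hST : S ⊆ T) : HasDecayWindow h φ S n :=
  fun V ↦
    let ⟨W, n', hagree, hW⟩ := hn V
    ⟨W, n', hagree, hW.anti hST⟩

lemma hasDecayWindow_empty (hnonneg : ∀ n, 0 ≤ h n) (φ : ℝ → ℝ) (n : ℕ) :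
    HasDecayWindow h φ ∅ n := by
  refine fun V ↦ ⟨Function.update V (n + 1) 0, n + 1, fun i hi ↦
    Function.update_of_ne (by lia) .., n.lt_succ_self, by lia, fun i hi ↦ ?_, by simp, by simp⟩
  obtain rfl : i = n + 1 := le_antisymm hi.2 hi.1
  rw [Function.update_self, abs_zero]
  exact div_nonneg (hnonneg _) (by positivity)

lemma one_sub_two_mul_div_mul_add_sq_le {x y : ℝ} (hx : 0 < x) (hy : 0 ≤ y) :
    (1 - 2 * (y / x)) * (x + y) ^ 2 ≤ x ^ 2 := by
  have hxy : (1 - 2 * (y / x)) * (x + y) ^ 2 = x ^ 2 - y ^ 2 * (3 + 2 * (y / x)) := by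
    field_simp
    ring
  rw [hxy]
  exact sub_le_self _ (by positivity)

lemma isDecayWindow_of_moments (hS : S ⊆ Set.Ioo (-2) 2) (hneg : ∀ e ∈ S, -e ∈ S)
    {v : ℕ → ℝ} {κ : ℝ} {L : ℕ} (hLκ : 1 ≤ L * κ) (hLn : L ≤ n + 1) (hv : ∀ m, |v m| ≤ κ)
    (hsum : ∑ m ∈ range L, v m = 1)
    (hmoment : ∀ e ∈ S, node e ^ (n + 1) * ∑ m ∈ range L, (v m : ℂ) * node e ^ m =
      feedback (solAmp V φ e n) (solAmp V φ (-e) n))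
    (hV : ∀ m, V (n + m + 1) = 16 * L / (n + 1) * v m)
    (hh : ∀ i ≥ n, 32 * (L * κ) ≤ h i)
    (hsmall : ∀ e ∈ S,
      512 * (L * κ) ^ 2 * (16 * L / (n + 1) / Real.sin (quasimomentum e)) ≤ 1) :
    IsDecayWindow h φ S V n (n + L) := by
  have hδ : (0 : ℝ) ≤ 16 * L / (n + 1) := by positivity
  have hκ : 0 ≤ κ := (abs_nonneg _).trans (hv 0)
  have hL : 0 < L := Nat.pos_of_ne_zero fun hL ↦ by norm_num [hL] at hLκ
  refine ⟨by lia, by lia, fun i hi ↦ ?_, fun e he ↦ ?_, fun e he i hi ↦ ?_⟩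
  · obtain ⟨m, rfl⟩ := Nat.exists_eq_add_of_lt hi.1
    have hin : 1 + ((n + m + 1 : ℕ) : ℝ) ≤ 2 * (n + 1) := by
      have := hi.2
      exact_mod_cast (by lia : 1 + (n + m + 1) ≤ 2 * (n + 1))
    rw [hV, abs_mul, abs_of_nonneg hδ, le_div_iff₀ (by positivity)]
    calc 16 * L / (n + 1) * |v m| * (1 + (n + m + 1 : ℕ))
        ≤ 16 * L / (n + 1) * κ * (2 * (n + 1)) := by gcongr; exact hv m
      _ = 32 * (L * κ) := by field_simp; ring
      _ ≤ h (n + m + 1) := hh _ (by lia)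
  · have hlyap := lyap_solAmp_window_le (hS he) hδ hLκ (hsmall e he) (fun m _ ↦ hV m) hv hsum
      (hmoment e he) (by simpa using hmoment (-e) (hneg e he))
    rw [show (16 * L / (n + 1) / 8 : ℝ) = 2 * (L / (n + 1)) by ring] at hlyap
    calc _ ≤ (1 - 2 * (L / (n + 1))) * lyap (solAmp V φ e n) (solAmp V φ (-e) n) *
          ((n + L : ℕ) + 1) ^ 2 := by gcongr
      _ = (1 - 2 * (L / (n + 1))) * ((n + 1) + L) ^ 2 *
          lyap (solAmp V φ e n) (solAmp V φ (-e) n) := by push_cast; ring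
      _ ≤ (n + 1) ^ 2 * lyap (solAmp V φ e n) (solAmp V φ (-e) n) := by
          gcongr
          · exact lyap_nonneg _ _
          · exact one_sub_two_mul_div_mul_add_sq_le (by positivity) (by positivity)
      _ = _ := mul_comm _ _
  · obtain ⟨m, rfl⟩ := Nat.exists_eq_add_of_le hi.1
    exact (solAmp_window (hS he) hδ hLκ (hsmall e he) (fun m _ ↦ hV m) hv hsum (hmoment e he)).1
      m (Nat.add_le_add_iff_left.1 hi.2)

lemma eventually_hasDecayWindow_of_forall_neg_mem {S : Finset ℝ}
    (hS : ∀ e ∈ S, e ∈ Set.Ioo (-2) 2) (hneg : ∀ e ∈ S, -e ∈ S) (φ : ℝ → ℝ)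
    (htend : Tendsto h atTop atTop) : ∀ᶠ n in atTop, HasDecayWindow h φ S n := by
  obtain ⟨κ, hκ, hprofile⟩ := exists_feedback_profile hS hneg
  set L := #S + 1
  have hLκ : 1 ≤ L * κ := one_le_mul_of_one_le_of_one_le (by simp [L]) hκ
  have hsmall : ∀ᶠ n : ℕ in atTop, ∀ e ∈ S,
      512 * (L * κ) ^ 2 * (16 * L / (n + 1) / Real.sin (quasimomentum e)) ≤ 1 := by
    refine (eventually_all_finset S).2 fun e _ ↦ ?_
    have hlim := (tendsto_one_div_add_atTop_nhds_zero_nat (𝕜 := ℝ)).const_mul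
      (512 * (L * κ) ^ 2 * (16 * L / Real.sin (quasimomentum e)))
    rw [mul_zero] at hlim
    filter_upwards [hlim.eventually_le_const one_pos] with n hn
    exact hn.trans_eq' (by ring)
  filter_upwards [hsmall, eventually_ge_atTop L,
    eventually_forall_ge_atTop.2 (htend.eventually_ge_atTop (32 * (L * κ)))] with n hsmall hn hh V
  obtain ⟨v, hv, hsum, hmoment⟩ := hprofile n fun e ↦ solAmp V φ e n
  let W : ℕ → ℝ := fun i ↦ if i ≤ n then V i else 16 * L / (n + 1) * v (i - n - 1)
  have hWV : ∀ i ≤ n, W i = V i := fun i hi ↦ if_pos hi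
  have hWv : ∀ m, W (n + m + 1) = 16 * L / (n + 1) * v m := fun m ↦ by
    simp only [W, if_neg (by lia : ¬n + m + 1 ≤ n), (by lia : n + m + 1 - n - 1 = m)]
  refine ⟨W, n + L, hWV, isDecayWindow_of_moments hS hneg hLκ (by lia) hv hsum
    (fun e he ↦ ?_) hWv hh hsmall⟩
  rw [hmoment e he, solAmp_congr φ e hWV, solAmp_congr φ (-e) hWV]

lemma eventually_hasDecayWindow (hfin : S.Finite) (hS : S ⊆ Set.Ioo (-2) 2) (φ : ℝ → ℝ)
    (htend : Tendsto h atTop atTop) : ∀ᶠ n in atTop, HasDecayWindow h φ S n := by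
  refine (eventually_hasDecayWindow_of_forall_neg_mem (S := (hfin.union hfin.neg).toFinset)
    (fun e he ↦ ?_) (by simp [or_comm]) φ htend).mono fun n hn ↦ hn.anti (by simp)
  rcases (Set.Finite.mem_toFinset _).1 he with he | he
  · exact hS he
  · have he' := hS he
    rwa [Set.neg_mem_Ioo_iff, neg_neg] at he'

lemma exists_chain_isDecayWindow {𝓔 : Set ℝ} (h𝓔 : 𝓔.Countable) (hE : 𝓔 ⊆ Set.Ioo (-2) 2)
    (φ : ℝ → ℝ) (hnonneg : ∀ n, 0 ≤ h n) (htend : Tendsto h atTop atTop) :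
    ∃ (V : ℕ → ℝ) (t : ℕ → ℕ), StrictMono t ∧ t 0 = 0 ∧ V 0 = 0 ∧
      (∀ m, IsDecayWindow h φ ∅ V (t m) (t (m + 1))) ∧
      ∀ e ∈ 𝓔, ∀ᶠ m in atTop, IsDecayWindow h φ {e} V (t m) (t (m + 1)) := by
  obtain ⟨f, hf⟩ := Set.countable_iff_exists_injOn.1 h𝓔
  let S : ℕ → Set ℝ := fun N ↦ 𝓔 ∩ f ⁻¹' Set.Iio N
  have hS₀ : ∀ n, HasDecayWindow h φ (S 0) n := fun n ↦
    (hasDecayWindow_empty hnonneg φ n).anti fun e he ↦ absurd he.2 (Nat.not_lt_zero _)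
  have hS : ∀ N, ∀ᶠ n in atTop, HasDecayWindow h φ (S N) n := fun N ↦
    eventually_hasDecayWindow (((Set.finite_Iio N).subset (Set.image_subset_iff.2
      Set.inter_subset_right)).of_finite_image (hf.mono Set.inter_subset_left))
      (Set.inter_subset_left.trans hE) φ htend
  obtain ⟨σ, hσ, hwindow⟩ := exists_tendsto_atTop_forall hS₀ hS
  obtain ⟨V, t, ht, ht₀, hV₀, hV⟩ := exists_forall_window
    (P := fun V n n' ↦ IsDecayWindow h φ (S (σ n)) V n n') 0 (fun _ _ _ ↦ IsDecayWindow.lt)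
    (fun _ _ _ _ hVW hV ↦ hV.congr hVW) fun V n ↦ hwindow n V
  refine ⟨V, t, ht, ht₀, hV₀, fun m ↦ (hV m).anti (Set.empty_subset _), fun e he ↦ ?_⟩
  filter_upwards [(hσ.comp ht.tendsto_atTop).eventually_gt_atTop (f e)] with m hm
  exact (hV m).anti (Set.singleton_subset_iff.2 ⟨he, hm⟩)

end DecayWindow

end

end EmbeddedEigenvalues

open EmbeddedEigenvalues in
theorem countably_many_embedded_eigenvalues_general {𝓔 : Set ℝ} (h𝓔 : 𝓔.Countable)
    (hE : 𝓔 ⊆ Set.Ioo (-2) 2) (φ : ℝ → ℝ) {h : ℕ → ℝ} (hnonneg : ∀ n, 0 ≤ h n)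
    (htend : Tendsto h atTop atTop) :
    ∃ V : ℕ → ℝ, (∀ n : ℕ, |V n| ≤ h n / (1 + (n : ℝ))) ∧
      ∀ e ∈ 𝓔, ∃ u : ℕ → ℝ, u ≠ 0 ∧ Summable (fun n ↦ u n ^ 2) ∧
        (∀ n : ℕ, 1 ≤ n → u (n + 1) + u (n - 1) + V n * u n = e * u n) ∧
        u 1 * Real.cos (φ e) = u 0 * Real.sin (φ e) := by
  obtain ⟨V, t, ht, ht₀, hV₀, hV, hV𝓔⟩ := exists_chain_isDecayWindow h𝓔 hE φ hnonneg htend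
  refine ⟨V, fun n ↦ ?_, fun e he ↦ ⟨sol V (φ e) e, sol_ne_zero V _ e,
    summable_sq_sol (hE he) ht (hV𝓔 e he), fun n hn ↦ ?_, mul_comm _ _⟩⟩
  · rcases n.eq_zero_or_pos with rfl | hn
    · simpa [hV₀] using hnonneg 0
    · obtain ⟨m, hm⟩ := ht.exists_between_of_tendsto_atTop ht.tendsto_atTop (ht₀.symm ▸ hn)
      exact (hV m).abs_le n hm
  · obtain ⟨n, rfl⟩ := Nat.exists_eq_add_of_le' hn
    rw [sol_add_two, Nat.add_sub_cancel]
    ring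

/-- Theorem 2: for any countable set of distinct energies in `(-2,2)`, any boundary
phases, and any non-decreasing positive `h` tending to infinity, there is a potential
`V` with `|V(n)| ≤ h(n)/(1+n)` such that each `E j` is an eigenvalue of `Δ + V` with
the prescribed boundary condition. -/
theorem countably_many_embedded_eigenvalues (E θ : ℕ → ℝ) (h : ℕ → ℝ)
    (hE : ∀ j, E j ∈ Set.Ioo (-2 : ℝ) 2)
    (hEinj : Function.Injective E)
    (hθ : ∀ j, θ j ∈ Set.Ico (0 : ℝ) Real.pi)
    (hpos : ∀ n, 0 < h n) (hmono : Monotone h)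
    (htend : Filter.Tendsto h Filter.atTop Filter.atTop) :
    ∃ V : ℕ → ℝ, (∀ n : ℕ, |V n| ≤ h n / (1 + (n : ℝ))) ∧
      ∀ j : ℕ, ∃ u : ℕ → ℝ, u ≠ 0 ∧ Summable (fun n => (u n) ^ 2) ∧
        (∀ n : ℕ, 1 ≤ n → u (n + 1) + u (n - 1) + V n * u n = E j * u n) ∧
        u 1 * Real.cos (θ j) = u 0 * Real.sin (θ j) := by
  simpa only [Set.forall_mem_range, hEinj.extend_apply] using
    countably_many_embedded_eigenvalues_general (Set.countable_range E)
      (Set.range_subset_iff.2 hE) (Function.extend E θ 0) (fun n ↦ (hpos n).le) htend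
end

section
/- Let E = 0, so k = 1/2 and sin(πk) = 1. Fix b ∈ ℕ and K₁ > 0, and let θ : {n ≥ n₀} → ℝ solve cot(πθ(n+1) - π/2) = cot(πθ(n)) - V(n), where V(n) = K₁·(sin(2πθ(n)) + 100)/(n-b). Let R(n) be the Prüfer radius for energy 0 of the corresponding solution. Then there exists C > 0 (depending on K₁) such that for all n with n - b ≥ C: (i) |ln R(n+2)² - ln R(n)² + (K₁/(n-b))·(1 - cos(4πθ(n)))| ≤ C/(n-b)², and (ii) |θ(n+2) - θ(n) - 1 - (K₁/(π(n-b)))·(100 - (1/2)·sin(4πθ(n)))| ≤ C/(n-b)². -/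
noncomputable section

/-- `u` solves the eigen-equation `u(n+1) + u(n-1) + V(n)u(n) = E·u(n)` for all `n ≥ 1`. -/
def EigenEq (V : ℕ → ℝ) (E : ℝ) (u : ℕ → ℝ) : Prop :=
  ∀ n : ℕ, 1 ≤ n → u (n + 1) + u (n - 1) + V n * u n = E * u n

/-- `(R, θ)` are modified Prüfer variables (radius and angle) of the solution `u`,
with quasimomentum `k`: `u(n-1) = R(n)·sin(πθ(n) - πk)` and
`(u(n) - cos(πk)·u(n-1))/sin(πk) = R(n)·cos(πθ(n) - πk)`, with `R(n) > 0`. -/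
def PruferRel (k : ℝ) (u R θ : ℕ → ℝ) : Prop :=
  ∀ n : ℕ, 1 ≤ n → 0 < R n ∧
    u (n - 1) = R n * Real.sin (Real.pi * θ n - Real.pi * k) ∧
    (u n - Real.cos (Real.pi * k) * u (n - 1)) / Real.sin (Real.pi * k)
      = R n * Real.cos (Real.pi * θ n - Real.pi * k)

/-- The Prüfer angle is chosen along the continuous branch:
`θ(n+1) - θ(n) - k ∈ (-1/2, 1/2)`. -/
def BranchCond (k : ℝ) (θ : ℕ → ℝ) : Prop :=
  ∀ n : ℕ, 1 ≤ n → |θ (n + 1) - θ n - k| < 1 / 2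

/-!
At energy `2 cos πk` one step of the recursion multiplies the complex Prüfer variable
`R(n)·exp(iπθ(n))` by `exp(iπk)·(1 + z)`, where `z = (iv/2)(1 - exp(-2ix))`, `x = πθ(n)` and
`v = V(n)/sin πk`. Taking logarithms, radius and angle are expanded together by
`log(1 + z) = z + O(|v|²)`.

At energy `0` the phase advances by `π/2 + O(v)`, which flips the sign of both `sin 2x` and
`exp(-2ix)`. Writing `s = sin 2x` and `q = exp(-2ix)`, two consecutive steps with
`v = κ(A + s)` and `v = κ(A - s)` contribute
`(iκ/2)((A + s)(1 - q) + (A - s)(1 + q)) = iκ(A - sq)`,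
whose real and imaginary parts are `-(κ/2)(1 - cos 4x)` and `κ(A - (1/2) sin 4x)`.
-/

section PruferStep

open Complex (I exp)
open scoped Real

/-- The logarithm `ln R(n) + iπθ(n)` of the complex Prüfer variable `R(n)·exp(iπθ(n))`, on the
branch selected by the angle `θ`. -/
def pruferLog (R θ : ℕ → ℝ) (n : ℕ) : ℂ :=
  Real.log (R n) + (π * θ n : ℝ) * I

/-- The relative change `-v·sin x·exp(-ix)` of the complex Prüfer variable caused by a potential of
strength `v` at phase `x`, written as a trigonometric polynomial in `2x`. -/
def pruferKick (v x : ℝ) : ℂ :=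
  I * v / 2 * (1 - exp ((-(2 * x) : ℝ) * I))

lemma pruferKick_add_pi_div_two (v x : ℝ) :
    pruferKick v (x + π / 2) = I * v / 2 * (1 + exp ((-(2 * x) : ℝ) * I)) := by
  have hphase : ((-(2 * (x + π / 2)) : ℝ) : ℂ) * I = (-(2 * x) : ℝ) * I - π * I := by
    push_cast
    ring
  rw [pruferKick, hphase, Complex.exp_sub_pi_mul_I, sub_neg_eq_add]

lemma exp_mul_one_add_pruferKick (v x : ℝ) :
    exp (x * I) * (1 + pruferKick v x) = exp (x * I) - v * Real.sin x := by
  have hconj : exp (x * I) * exp ((-(2 * x) : ℝ) * I) = exp (-x * I) := by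
    rw [← Complex.exp_add]
    congr 1
    push_cast
    ring
  rw [pruferKick, Complex.ofReal_sin, Complex.sin]
  linear_combination -(I * v / 2) * hconj

lemma norm_pruferKick_le (v x : ℝ) : ‖pruferKick v x‖ ≤ |v| := by
  have hphase : ‖1 - exp ((-(2 * x) : ℝ) * I)‖ ≤ 2 := by
    refine (norm_sub_le _ _).trans_eq ?_
    rw [Complex.norm_exp_ofReal_mul_I, norm_one, one_add_one_eq_two]
  calc ‖pruferKick v x‖ = |v| / 2 * ‖1 - exp ((-(2 * x) : ℝ) * I)‖ := by simp [pruferKick]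
    _ ≤ |v| / 2 * 2 := by gcongr
    _ = |v| := by ring

lemma norm_exp_ofReal_mul_I_sub_le (x y : ℝ) : ‖exp (x * I) - exp (y * I)‖ ≤ |x - y| := by
  have hfactor : exp (x * I) - exp (y * I) = exp (y * I) * (exp (I * (x - y : ℝ)) - 1) := by
    rw [mul_sub, ← Complex.exp_add, mul_one]
    push_cast
    ring_nf
  rw [hfactor, norm_mul, Complex.norm_exp_ofReal_mul_I, one_mul]
  exact Real.norm_exp_I_mul_ofReal_sub_one_le

lemma norm_pruferKick_sub_le (v w x y : ℝ) :
    ‖pruferKick v y - pruferKick w x‖ ≤ |v - w| + |w| * |y - x| := by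
  have hphase : ‖exp ((-(2 * x) : ℝ) * I) - exp ((-(2 * y) : ℝ) * I)‖ ≤ 2 * |y - x| := by
    refine (norm_exp_ofReal_mul_I_sub_le _ _).trans_eq ?_
    rw [← abs_two, ← abs_mul]
    ring_nf
  have hsplit : pruferKick v y - pruferKick w x = pruferKick (v - w) y
      + I * w / 2 * (exp ((-(2 * x) : ℝ) * I) - exp ((-(2 * y) : ℝ) * I)) := by
    simp only [pruferKick, Complex.ofReal_sub]
    ring
  rw [hsplit]
  refine norm_add_le_of_le (norm_pruferKick_le _ _) ?_
  calc ‖I * w / 2 * (exp ((-(2 * x) : ℝ) * I) - exp ((-(2 * y) : ℝ) * I))‖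
      = |w| / 2 * ‖exp ((-(2 * x) : ℝ) * I) - exp ((-(2 * y) : ℝ) * I)‖ := by simp
    _ ≤ |w| / 2 * (2 * |y - x|) := by gcongr
    _ = |w| * |y - x| := by ring

variable {k : ℝ} {V u R θ : ℕ → ℝ} {n : ℕ}

lemma pruferLog_succ_sub_im :
    (pruferLog R θ (n + 1) - pruferLog R θ n - (π * k : ℝ) * I).im
      = π * (θ (n + 1) - θ n - k) := by
  simp only [pruferLog, Complex.sub_im, Complex.add_im, Complex.ofReal_im, Complex.im_ofReal_mul,
    Complex.I_im]
  ring

lemma PruferRel.eq_mul_sin (hP : PruferRel k u R θ) (hk : Real.sin (π * k) ≠ 0) (hn : 1 ≤ n) :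
    u n = R n * Real.sin (π * θ n) := by
  obtain ⟨-, hsin, hcos⟩ := hP n hn
  rw [div_eq_iff hk, hsin] at hcos
  have hadd := Real.sin_add (π * θ n - π * k) (π * k)
  rw [sub_add_cancel] at hadd
  linear_combination hcos - R n * hadd

lemma PruferRel.mul_exp_succ (hP : PruferRel k u R θ) (hE : EigenEq V (2 * Real.cos (π * k)) u)
    (hk : Real.sin (π * k) ≠ 0) (hn : 1 ≤ n) :
    R (n + 1) * exp ((π * θ (n + 1) - π * k : ℝ) * I)
      = R n * (exp ((π * θ n : ℝ) * I) * (1 + pruferKick (V n / Real.sin (π * k)) (π * θ n))) := by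
  obtain ⟨-, hprev, -⟩ := hP n hn
  obtain ⟨-, hsin, hcos⟩ := hP (n + 1) n.succ_pos
  have hu := hP.eq_mul_sin hk hn
  rw [Nat.add_sub_cancel, hu] at hsin
  have hre : R (n + 1) * Real.cos (π * θ (n + 1) - π * k)
      = R n * (Real.cos (π * θ n) - V n / Real.sin (π * k) * Real.sin (π * θ n)) := by
    have heig := hE n hn
    rw [hprev, hu, Real.sin_sub] at heig
    rw [← hcos, Nat.add_sub_cancel, hu]
    field_simp
    linear_combination heig
  rw [exp_mul_one_add_pruferKick, Complex.exp_ofReal_mul_I, Complex.exp_ofReal_mul_I]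
  have hsinC := congrArg Complex.ofReal hsin
  have hreC := congrArg Complex.ofReal hre
  push_cast at hsinC hreC ⊢
  linear_combination hreC - I * hsinC

/-- `R > 0` determines `θ` only modulo `2`; the bound on the increment of `θ` puts the left-hand
side on the principal branch. -/
lemma PruferRel.pruferLog_succ_sub_eq_log (hP : PruferRel k u R θ)
    (hE : EigenEq V (2 * Real.cos (π * k)) u) (hk : Real.sin (π * k) ≠ 0) (hn : 1 ≤ n)
    (hθ : |θ (n + 1) - θ n - k| < 1) :
    pruferLog R θ (n + 1) - pruferLog R θ n - (π * k : ℝ) * I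
      = Complex.log (1 + pruferKick (V n / Real.sin (π * k)) (π * θ n)) := by
  have hexp : exp (pruferLog R θ (n + 1) - pruferLog R θ n - (π * k : ℝ) * I)
      = 1 + pruferKick (V n / Real.sin (π * k)) (π * θ n) := by
    have hR := (hP n hn).1
    have hR' := (hP (n + 1) n.succ_pos).1
    have hsplit : pruferLog R θ (n + 1) - pruferLog R θ n - (π * k : ℝ) * I
        = Real.log (R (n + 1)) + (π * θ (n + 1) - π * k : ℝ) * I
          - (Real.log (R n) + (π * θ n : ℝ) * I) := by
      simp only [pruferLog, Complex.ofReal_sub]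
      ring
    rw [hsplit, Complex.exp_sub, Complex.exp_add, Complex.exp_add, ← Complex.ofReal_exp,
      ← Complex.ofReal_exp, Real.exp_log hR, Real.exp_log hR', hP.mul_exp_succ hE hk hn,
      ← mul_assoc, mul_div_cancel_left₀]
    exact mul_ne_zero (Complex.ofReal_ne_zero.mpr hR.ne') (Complex.exp_ne_zero _)
  obtain ⟨hlower, hupper⟩ := abs_lt.mp hθ
  rw [← hexp, Complex.log_exp] <;> rw [pruferLog_succ_sub_im] <;> nlinarith [Real.pi_pos]

lemma norm_log_one_add_sub_self_le_sq {z : ℂ} (hz : ‖z‖ ≤ 1 / 2) :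
    ‖Complex.log (1 + z) - z‖ ≤ ‖z‖ ^ 2 := by
  have hinv : (1 - ‖z‖)⁻¹ ≤ 2 := inv_le_of_inv_le₀ two_pos (by linarith)
  calc ‖Complex.log (1 + z) - z‖ ≤ ‖z‖ ^ 2 * (1 - ‖z‖)⁻¹ / 2 :=
        Complex.norm_log_one_add_sub_self_le (by linarith)
    _ ≤ ‖z‖ ^ 2 * 2 / 2 := by gcongr
    _ = ‖z‖ ^ 2 := by ring

lemma PruferRel.norm_pruferLog_succ_sub_sub_pruferKick_le (hP : PruferRel k u R θ)
    (hE : EigenEq V (2 * Real.cos (π * k)) u) (hk : Real.sin (π * k) ≠ 0) (hn : 1 ≤ n)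
    (hθ : |θ (n + 1) - θ n - k| < 1) {ε : ℝ} (hV : |V n / Real.sin (π * k)| ≤ ε)
    (hε : ε ≤ 1 / 2) :
    ‖pruferLog R θ (n + 1) - pruferLog R θ n - (π * k : ℝ) * I
        - pruferKick (V n / Real.sin (π * k)) (π * θ n)‖ ≤ ε ^ 2 := by
  have hkick := (norm_pruferKick_le _ (π * θ n)).trans hV
  rw [hP.pruferLog_succ_sub_eq_log hE hk hn hθ]
  exact (norm_log_one_add_sub_self_le_sq (hkick.trans hε)).trans (by gcongr)

lemma PruferRel.abs_angle_succ_sub_le (hP : PruferRel k u R θ)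
    (hE : EigenEq V (2 * Real.cos (π * k)) u) (hk : Real.sin (π * k) ≠ 0) (hn : 1 ≤ n)
    (hθ : |θ (n + 1) - θ n - k| < 1) {ε : ℝ} (hV : |V n / Real.sin (π * k)| ≤ ε)
    (hε : ε ≤ 1 / 2) :
    |π * (θ (n + 1) - θ n - k)| ≤ 2 * ε := by
  have hε₀ : 0 ≤ ε := (abs_nonneg _).trans hV
  have him : π * (θ (n + 1) - θ n - k)
      = (pruferLog R θ (n + 1) - pruferLog R θ n - (π * k : ℝ) * I).im := by
    rw [pruferLog_succ_sub_im]
  rw [him]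
  calc |(pruferLog R θ (n + 1) - pruferLog R θ n - (π * k : ℝ) * I).im|
      ≤ ‖pruferLog R θ (n + 1) - pruferLog R θ n - (π * k : ℝ) * I‖ := Complex.abs_im_le_norm _
    _ ≤ ‖pruferKick (V n / Real.sin (π * k)) (π * θ n)‖ + ε ^ 2 :=
        norm_le_norm_add_const_of_dist_le <| (dist_eq_norm _ _).trans_le <|
          hP.norm_pruferLog_succ_sub_sub_pruferKick_le hE hk hn hθ hV hε
    _ ≤ ε + ε ^ 2 := by grw [norm_pruferKick_le, hV]
    _ ≤ 2 * ε := by nlinarith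

end PruferStep

section Resonance

open Complex (I exp)
open scoped Real

/-- The leading increment of `pruferLog` over one period of two sites at energy `0`, per unit of
`K / (n - b)`, for the generating function `K·(sin 2x + A) / (n - b)` at phase `x`. -/
def resonantDrift (A x : ℝ) : ℂ :=
  I * (A - Real.sin (2 * x) * exp ((-(2 * x) : ℝ) * I))

lemma resonantDrift_eq (A x : ℝ) :
    resonantDrift A x
      = (-Real.sin (2 * x) ^ 2 : ℝ) + (A - Real.sin (2 * x) * Real.cos (2 * x) : ℝ) * I := by
  rw [resonantDrift, Complex.exp_ofReal_mul_I, Real.cos_neg, Real.sin_neg]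
  push_cast
  linear_combination Complex.sin (2 * x) ^ 2 * Complex.I_sq

lemma two_mul_resonantDrift_re (A x : ℝ) :
    2 * (resonantDrift A x).re = -(1 - Real.cos (4 * x)) := by
  have hcos : Real.cos (4 * x) = 1 - 2 * Real.sin (2 * x) ^ 2 := by
    rw [Real.sin_sq_eq_half_sub]
    ring_nf
  rw [hcos, resonantDrift_eq, Complex.add_re, Complex.ofReal_re, Complex.re_ofReal_mul,
    Complex.I_re]
  ring

lemma resonantDrift_im (A x : ℝ) :
    (resonantDrift A x).im = A - 1 / 2 * Real.sin (4 * x) := by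
  have hsin : Real.sin (4 * x) = 2 * Real.sin (2 * x) * Real.cos (2 * x) := by
    rw [← Real.sin_two_mul]
    ring_nf
  rw [hsin, resonantDrift_eq, Complex.add_im, Complex.ofReal_im, Complex.im_ofReal_mul,
    Complex.I_im]
  ring

lemma pruferKick_add_pruferKick_eq_resonantDrift (κ A x : ℝ) :
    pruferKick (κ * (Real.sin (2 * x) + A)) x
        + pruferKick (κ * (-Real.sin (2 * x) + A)) (x + π / 2)
      = κ * resonantDrift A x := by
  rw [pruferKick_add_pi_div_two, pruferKick, resonantDrift]
  push_cast
  ring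

lemma abs_mul_add_div_le {K A s N ε : ℝ} (hs : |s| ≤ 1) (hN : 0 < N)
    (hKA : |K| * (1 + |A|) ≤ ε * N) : |K * (s + A) / N| ≤ ε := by
  rw [abs_div, abs_mul, abs_of_pos hN, div_le_iff₀ hN]
  refine le_trans ?_ hKA
  gcongr
  exact (abs_add_le s A).trans (by gcongr)

lemma abs_resonant_strength_sub_le {K A N x δ ε : ℝ} (hN : 0 < N)
    (hKA : |K| * (1 + |A|) ≤ ε * N) (hone : 1 ≤ ε * N) (hδ : |δ| ≤ 2 * ε) :
    |K * (-Real.sin (2 * (x + δ)) + A) / (N + 1) - K / N * (-Real.sin (2 * x) + A)|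
      ≤ 5 * ε ^ 2 := by
  set v := K * (-Real.sin (2 * (x + δ)) + A) / (N + 1) with hv_def
  have hε : 0 ≤ ε := by linarith [abs_nonneg δ]
  have hv : |v| ≤ ε :=
    abs_mul_add_div_le (by simpa using Real.abs_sin_le_one _) (by positivity) (by linarith)
  have hinv : |1 / N| ≤ ε := by rwa [abs_of_pos (by positivity), div_le_iff₀ hN]
  have hκ : |K / N| ≤ ε := by
    rw [abs_div, abs_of_pos hN, div_le_iff₀ hN]
    nlinarith [abs_nonneg K, abs_nonneg A]
  have hsin : |Real.sin (2 * x) - Real.sin (2 * (x + δ))| ≤ 4 * ε := by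
    refine (Real.abs_sin_sub_sin_le _ _).trans ?_
    rw [show 2 * x - 2 * (x + δ) = -(2 * δ) by ring, abs_neg, abs_mul, abs_two]
    linarith
  have hsplit : v - K / N * (-Real.sin (2 * x) + A)
      = K / N * (Real.sin (2 * x) - Real.sin (2 * (x + δ))) - 1 / N * v := by
    rw [hv_def]
    field_simp
    ring
  calc |v - K / N * (-Real.sin (2 * x) + A)|
      ≤ |K / N| * |Real.sin (2 * x) - Real.sin (2 * (x + δ))| + |1 / N| * |v| := by
        rw [hsplit, ← abs_mul, ← abs_mul]
        exact abs_sub _ _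
    _ ≤ ε * (4 * ε) + ε * ε := by gcongr
    _ = 5 * ε ^ 2 := by ring

lemma norm_pruferKick_pair_sub_resonantDrift_le {K A N x δ ε : ℝ} (hN : 0 < N)
    (hKA : |K| * (1 + |A|) ≤ ε * N) (hone : 1 ≤ ε * N) (hδ : |δ| ≤ 2 * ε) :
    ‖pruferKick (K * (Real.sin (2 * x) + A) / N) x
        + pruferKick (K * (-Real.sin (2 * (x + δ)) + A) / (N + 1)) (x + δ + π / 2)
        - (K / N : ℝ) * resonantDrift A x‖ ≤ 7 * ε ^ 2 := by
  have hε : 0 ≤ ε := by linarith [abs_nonneg δ]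
  set w := K / N * (-Real.sin (2 * x) + A) with hw_def
  have hw : |w| ≤ ε := by
    rw [hw_def, div_mul_eq_mul_div]
    exact abs_mul_add_div_le (by simpa using Real.abs_sin_le_one _) hN hKA
  rw [← pruferKick_add_pruferKick_eq_resonantDrift, ← div_mul_eq_mul_div, add_sub_add_left_eq_sub]
  refine (norm_pruferKick_sub_le _ _ _ _).trans ?_
  rw [add_sub_add_right_eq_sub, add_sub_cancel_left]
  calc _ ≤ 5 * ε ^ 2 + ε * (2 * ε) := by
        gcongr
        exact abs_resonant_strength_sub_le hN hKA hone hδ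
    _ = 7 * ε ^ 2 := by ring

variable {V u R θ : ℕ → ℝ} {n : ℕ}

lemma PruferRel.norm_pruferLog_add_two_sub_le (hP : PruferRel (1 / 2) u R θ)
    (hE : EigenEq V 0 u) (hn : 1 ≤ n) (hθ₁ : |θ (n + 1) - θ n - 1 / 2| < 1)
    (hθ₂ : |θ (n + 2) - θ (n + 1) - 1 / 2| < 1) {K A N ε : ℝ} (hN : 0 < N)
    (hV₁ : V n = K * (Real.sin (2 * (π * θ n)) + A) / N)
    (hV₂ : V (n + 1) = K * (Real.sin (2 * (π * θ (n + 1))) + A) / (N + 1))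
    (hKA : |K| * (1 + |A|) ≤ ε * N) (hone : 1 ≤ ε * N) (hε : ε ≤ 1 / 2) :
    ‖pruferLog R θ (n + 2) - pruferLog R θ n - π * I
        - (K / N : ℝ) * resonantDrift A (π * θ n)‖ ≤ 9 * ε ^ 2 := by
  have hε₀ : 0 < ε := pos_of_mul_pos_left (one_pos.trans_le hone) hN.le
  have hsin : Real.sin (π * (1 / 2)) = 1 := by rw [mul_one_div, Real.sin_pi_div_two]
  have hk : Real.sin (π * (1 / 2)) ≠ 0 := by rw [hsin]; exact one_ne_zero
  have hE' : EigenEq V (2 * Real.cos (π * (1 / 2))) u := by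
    rwa [mul_one_div, Real.cos_pi_div_two, mul_zero]
  have hv₁ : |V n / Real.sin (π * (1 / 2))| ≤ ε := by
    rw [hsin, div_one, hV₁]
    exact abs_mul_add_div_le (Real.abs_sin_le_one _) hN hKA
  have hv₂ : |V (n + 1) / Real.sin (π * (1 / 2))| ≤ ε := by
    rw [hsin, div_one, hV₂]
    exact abs_mul_add_div_le (Real.abs_sin_le_one _) (by positivity) (by linarith)
  have hδ := hP.abs_angle_succ_sub_le hE' hk hn hθ₁ hv₁ hε
  have hstep₁ := hP.norm_pruferLog_succ_sub_sub_pruferKick_le hE' hk hn hθ₁ hv₁ hε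
  have hstep₂ := hP.norm_pruferLog_succ_sub_sub_pruferKick_le hE' hk n.succ_pos hθ₂ hv₂ hε
  have hpair := norm_pruferKick_pair_sub_resonantDrift_le (x := π * θ n) hN hKA hone hδ
  set δ := π * (θ (n + 1) - θ n - 1 / 2) with hδ_def
  have hphase : π * θ (n + 1) = π * θ n + δ + π / 2 := by
    rw [hδ_def]
    ring
  have hflip : Real.sin (2 * (π * θ n + δ + π / 2)) = -Real.sin (2 * (π * θ n + δ)) := by
    rw [← Real.sin_add_pi]
    ring_nf
  rw [hsin, div_one, hV₁] at hstep₁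
  rw [hsin, div_one, hV₂, hphase, hflip] at hstep₂
  have hsum := norm_add_le_of_le (norm_add_le_of_le hstep₁ hstep₂) hpair
  calc _ = _ := by
        congr 1
        push_cast
        ring
    _ ≤ ε ^ 2 + ε ^ 2 + 7 * ε ^ 2 := hsum
    _ = 9 * ε ^ 2 := by ring

lemma two_mul_pruferLog_add_two_sub_re (κ A : ℝ) :
    2 * (pruferLog R θ (n + 2) - pruferLog R θ n - π * I
        - κ * resonantDrift A (π * θ n)).re
      = Real.log (R (n + 2) ^ 2) - Real.log (R n ^ 2)
        + κ * (1 - Real.cos (4 * π * θ n)) := by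
  have hdrift := two_mul_resonantDrift_re A (π * θ n)
  rw [← mul_assoc] at hdrift
  simp only [pruferLog, Complex.sub_re, Complex.add_re, Complex.ofReal_re, Complex.re_ofReal_mul,
    Complex.I_re, mul_zero, add_zero, sub_zero, Real.log_pow]
  push_cast
  linear_combination -κ * hdrift

lemma pruferLog_add_two_sub_im_div_pi (κ A : ℝ) :
    (pruferLog R θ (n + 2) - pruferLog R θ n - π * I
        - κ * resonantDrift A (π * θ n)).im / π
      = θ (n + 2) - θ n - 1 - κ / π * (A - 1 / 2 * Real.sin (4 * π * θ n)) := by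
  have hdrift := resonantDrift_im A (π * θ n)
  rw [← mul_assoc] at hdrift
  simp only [pruferLog, Complex.sub_im, Complex.add_im, Complex.ofReal_im, Complex.im_ofReal_mul,
    Complex.I_im, mul_one, zero_add, hdrift]
  field_simp

theorem zero_energy_block_expansion_general (b K A : ℝ) :
    ∃ C : ℝ, 0 < C ∧
      ∀ (n₀ : ℕ) (V θ u R : ℕ → ℝ),
        (∀ n : ℕ, n₀ ≤ n → V n = K * (Real.sin (2 * π * θ n) + A) / (n - b)) →
        (∀ n : ℕ, n₀ ≤ n → |θ (n + 1) - θ n - 1 / 2| < 1) →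
        EigenEq V 0 u → PruferRel (1 / 2) u R θ →
        ∀ n : ℕ, n₀ ≤ n → n - b ≥ C →
          |Real.log (R (n + 2) ^ 2) - Real.log (R n ^ 2)
              + K / (n - b) * (1 - Real.cos (4 * π * θ n))| ≤ C / (n - b) ^ 2 ∧
          |θ (n + 2) - θ n - 1
              - K / (π * (n - b)) * (A - 1 / 2 * Real.sin (4 * π * θ n))| ≤ C / (n - b) ^ 2 := by
  set L := |K| * (1 + |A|) + 1 with hL_def
  have hL : 1 ≤ L := le_add_of_nonneg_left (by positivity)
  refine ⟨18 * L ^ 2 + |b|, by positivity, fun n₀ V θ u R hV hθ hE hP n hn hC => ?_⟩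
  have hN : 0 < n - b := lt_of_lt_of_le (by positivity) hC
  have hn₁ : 1 ≤ n := by
    rw [← Nat.one_le_cast (α := ℝ)]
    nlinarith [neg_abs_le b]
  have hsmall : L / (n - b) ≤ 1 / 2 := by
    rw [div_le_iff₀ hN]
    nlinarith [abs_nonneg b]
  have hLN : L / (n - b) * (n - b) = L := div_mul_cancel₀ L hN.ne'
  have hV₂ := hV (n + 1) (by lia)
  rw [Nat.cast_succ, add_sub_right_comm, mul_assoc] at hV₂
  have hmain := hP.norm_pruferLog_add_two_sub_le hE hn₁ (hθ n hn) (hθ (n + 1) (by lia)) hN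
    (by rw [hV n hn, mul_assoc]) hV₂ (by rw [hLN, hL_def]; linarith) (by rwa [hLN]) hsmall
  have hbound : 18 * (L / (n - b)) ^ 2 ≤ (18 * L ^ 2 + |b|) / (n - b) ^ 2 := by
    rw [div_pow, ← mul_div_assoc]
    gcongr
    exact le_add_of_nonneg_right (abs_nonneg b)
  constructor
  · rw [← two_mul_pruferLog_add_two_sub_re (A := A), abs_mul, abs_two]
    linarith [(Complex.abs_re_le_norm _).trans hmain]
  · rw [mul_comm π, ← div_div, ← pruferLog_add_two_sub_im_div_pi (R := R), abs_div,
      abs_of_pos Real.pi_pos]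
    refine (div_le_self (abs_nonneg _) (by linarith [Real.pi_gt_three])).trans ?_
    linarith [(Complex.abs_im_le_norm _).trans hmain, sq_nonneg (L / (n - b))]

end Resonance

/-- The self-resonant case `E = 0` (`k = 1/2`, `sin πk = 1`): with the generating
function `V(n) = K₁(sin 2πθ(n) + 100)/(n-b)`, the Prüfer variables at energy `0`
satisfy, for `n - b` large,
(i) `ln R(n+2)² = ln R(n)² - (K₁/(n-b))(1 - cos 4πθ(n)) + O(1/(n-b)²)` and
(ii) `θ(n+2) = θ(n) + 1 + (K₁/(π(n-b)))(100 - (1/2)sin 4πθ(n)) + O(1/(n-b)²)`. -/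
theorem zero_energy_block_expansion (b : ℕ) (K₁ : ℝ) (hK₁ : 0 < K₁) :
    ∃ C : ℝ, 0 < C ∧
      ∀ (n₀ : ℕ) (V θ u R : ℕ → ℝ),
        (∀ n : ℕ, n₀ ≤ n → V n
            = K₁ * (Real.sin (2 * Real.pi * θ n) + 100) / ((n : ℝ) - (b : ℝ))) →
        (∀ n : ℕ, n₀ ≤ n →
          Real.cot (Real.pi * θ (n + 1) - Real.pi / 2)
              = Real.cot (Real.pi * θ n) - V n ∧
            |θ (n + 1) - θ n - 1 / 2| < 1 / 2) →
        u ≠ 0 → EigenEq V 0 u → PruferRel (1 / 2) u R θ →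
        ∀ n : ℕ, n₀ ≤ n → (n : ℝ) - (b : ℝ) ≥ C →
          |Real.log ((R (n + 2)) ^ 2) - Real.log ((R n) ^ 2)
              + K₁ / ((n : ℝ) - (b : ℝ)) * (1 - Real.cos (4 * Real.pi * θ n))|
            ≤ C / ((n : ℝ) - (b : ℝ)) ^ 2 ∧
          |θ (n + 2) - θ n - 1
              - K₁ / (Real.pi * ((n : ℝ) - (b : ℝ)))
                * (100 - (1 / 2) * Real.sin (4 * Real.pi * θ n))|
            ≤ C / ((n : ℝ) - (b : ℝ)) ^ 2 := by
  obtain ⟨C, hC, hexp⟩ := zero_energy_block_expansion_general b K₁ 100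
  exact ⟨C, hC, fun n₀ V θ u R hV hθ _ hE hP =>
    hexp n₀ V θ u R hV (fun n hn => (hθ n hn).2.trans (by norm_num)) hE hP⟩
end
end
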